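/- arXiv:2401.14875 — 5 statements merged into one kernel-verified Lean document; each statement's English description precedes it below -/
import Mathlib

section
/- Let (C, Δ_C, R_C) and (M, Δ_M, R_M) be λ-weighted Rota-Baxter Lie coalgebras. The assignment sending the equivalence class of a non-abelian extension of (C, Δ_C, R_C) by (M, Δ_M, R_M) to the equivalence class of the non-abelian 2-cocycle induced by any retraction is a well-defined bijection between the set Ext_nab(M,C) of equivalence classes of non-abelian extensions and the set H²_nab(M,C) of equivalence classes of non-abelian 2-cocycles. -/
open TensorProduct LinearMap

section

variable {k : Type*} [Field k]
variable {C : Type*} [AddCommGroup C] [Module k C]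
variable {M : Type*} [AddCommGroup M] [Module k M]
variable {E : Type*} [AddCommGroup E] [Module k E]

/-- Co-antisymmetry of a cobracket: `Δ = -τΔ`. -/
def CoAnti (Δ : C →ₗ[k] C ⊗[k] C) : Prop :=
  Δ = -((TensorProduct.comm k C C).toLinearMap ∘ₗ Δ)

/-- The co-Jacobi identity `(I⊗Δ)Δ - (Δ⊗I)Δ + (I⊗τ)(Δ⊗I)Δ = 0`. -/
def CoJacobi (Δ : C →ₗ[k] C ⊗[k] C) : Prop :=
  lTensor C Δ ∘ₗ Δ
    - (TensorProduct.assoc k C C C).toLinearMap ∘ₗ rTensor C Δ ∘ₗ Δ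
    + lTensor C (TensorProduct.comm k C C).toLinearMap ∘ₗ
        (TensorProduct.assoc k C C C).toLinearMap ∘ₗ rTensor C Δ ∘ₗ Δ = 0

/-- `(R⊗R)Δ = (I⊗R + R⊗I + λI) Δ R`. -/
def IsRBO (lam : k) (Δ : C →ₗ[k] C ⊗[k] C) (R : C →ₗ[k] C) : Prop :=
  TensorProduct.map R R ∘ₗ Δ
    = (lTensor C R + rTensor C R + lam • (LinearMap.id : C ⊗[k] C →ₗ[k] C ⊗[k] C)) ∘ₗ Δ ∘ₗ R

/-- `λ`-weighted Rota-Baxter Lie coalgebra. -/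
def IsRBLC (lam : k) (Δ : C →ₗ[k] C ⊗[k] C) (R : C →ₗ[k] C) : Prop :=
  CoAnti Δ ∧ CoJacobi Δ ∧ IsRBO lam Δ R

/-- Homomorphism of `λ`-weighted Rota-Baxter Lie coalgebras:
`(θ⊗θ)Δ_C = Δ_E θ` and `R_E θ = θ R_C`. -/
def IsHom (ΔC : C →ₗ[k] C ⊗[k] C) (RC : C →ₗ[k] C)
    (ΔE : E →ₗ[k] E ⊗[k] E) (RE : E →ₗ[k] E) (θ : C →ₗ[k] E) : Prop :=
  TensorProduct.map θ θ ∘ₗ ΔC = ΔE ∘ₗ θ ∧ RE ∘ₗ θ = θ ∘ₗ RC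

/-- Non-abelian 2-cocycle `(h, ρ, φ)` on `(C, Δ_C, R_C)` with values in `(M, Δ_M, R_M)`. -/
def NA2Cocycle (lam : k) (ΔC : C →ₗ[k] C ⊗[k] C) (RC : C →ₗ[k] C)
    (ΔM : M →ₗ[k] M ⊗[k] M) (RM : M →ₗ[k] M)
    (h : M →ₗ[k] C ⊗[k] C) (ρ : M →ₗ[k] M ⊗[k] C) (φ : M →ₗ[k] C) : Prop :=
  -- (1)  τh + h = 0
  ((TensorProduct.comm k C C).toLinearMap ∘ₗ h + h = 0) ∧
  -- (2)  (I⊗Δ_C)h − (Δ_C⊗I)h + (I⊗τ)(Δ_C⊗I)h = (h⊗I)ρ + (I⊗h)τρ − (I⊗τ)(h⊗I)ρ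
  (lTensor C ΔC ∘ₗ h
      - (TensorProduct.assoc k C C C).toLinearMap ∘ₗ rTensor C ΔC ∘ₗ h
      + lTensor C (TensorProduct.comm k C C).toLinearMap ∘ₗ
          (TensorProduct.assoc k C C C).toLinearMap ∘ₗ rTensor C ΔC ∘ₗ h
    = (TensorProduct.assoc k C C C).toLinearMap ∘ₗ
        TensorProduct.map h (LinearMap.id : C →ₗ[k] C) ∘ₗ ρ
      + lTensor C h ∘ₗ (TensorProduct.comm k M C).toLinearMap ∘ₗ ρ
      - lTensor C (TensorProduct.comm k C C).toLinearMap ∘ₗ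
          (TensorProduct.assoc k C C C).toLinearMap ∘ₗ
          TensorProduct.map h (LinearMap.id : C →ₗ[k] C) ∘ₗ ρ) ∧
  -- (3)  (I⊗Δ_C)ρ + (I⊗h)Δ_M = (ρ⊗I)ρ − (I⊗τ)(ρ⊗I)ρ
  (lTensor M ΔC ∘ₗ ρ + lTensor M h ∘ₗ ΔM
    = (TensorProduct.assoc k M C C).toLinearMap ∘ₗ rTensor C ρ ∘ₗ ρ
      - lTensor M (TensorProduct.comm k C C).toLinearMap ∘ₗ
          (TensorProduct.assoc k M C C).toLinearMap ∘ₗ rTensor C ρ ∘ₗ ρ) ∧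
  -- (4)  (Δ_M⊗I)ρ = (I⊗τ)(ρ⊗I)Δ_M + (I⊗ρ)Δ_M
  ((TensorProduct.assoc k M M C).toLinearMap ∘ₗ rTensor C ΔM ∘ₗ ρ
    = lTensor M (TensorProduct.comm k C M).toLinearMap ∘ₗ
        (TensorProduct.assoc k M C M).toLinearMap ∘ₗ rTensor M ρ ∘ₗ ΔM
      + lTensor M ρ ∘ₗ ΔM) ∧
  -- (5)
  (TensorProduct.map φ RC ∘ₗ ρ
      - TensorProduct.map RC φ ∘ₗ (TensorProduct.comm k M C).toLinearMap ∘ₗ ρ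
      - TensorProduct.map φ (LinearMap.id : C →ₗ[k] C) ∘ₗ ρ ∘ₗ RM
      + lTensor C φ ∘ₗ (TensorProduct.comm k M C).toLinearMap ∘ₗ ρ ∘ₗ RM
      + TensorProduct.map φ φ ∘ₗ ΔM
      - (lTensor C RC + rTensor C RC
          + lam • (LinearMap.id : C ⊗[k] C →ₗ[k] C ⊗[k] C)) ∘ₗ ΔC ∘ₗ φ
    = (rTensor C RC + lTensor C RC
        + lam • (LinearMap.id : C ⊗[k] C →ₗ[k] C ⊗[k] C)) ∘ₗ h ∘ₗ RM
      - TensorProduct.map RC RC ∘ₗ h) ∧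
  -- (6)  (R_M⊗φ)Δ_M + (R_M⊗R_C)ρ = (I⊗φ)Δ_M R_M + (I⊗R_C + R_M⊗I + λ)ρR_M
  (TensorProduct.map RM φ ∘ₗ ΔM + TensorProduct.map RM RC ∘ₗ ρ
    = lTensor M φ ∘ₗ ΔM ∘ₗ RM
      + (lTensor M RC + rTensor C RM
          + lam • (LinearMap.id : M ⊗[k] C →ₗ[k] M ⊗[k] C)) ∘ₗ ρ ∘ₗ RM)

/-- The cobracket `Δ_{(h,ρ)}` on `C ⊕ M`. -/
noncomputable def prodCobra (ΔC : C →ₗ[k] C ⊗[k] C) (ΔM : M →ₗ[k] M ⊗[k] M)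
    (h : M →ₗ[k] C ⊗[k] C) (ρ : M →ₗ[k] M ⊗[k] C) :
    (C × M) →ₗ[k] (C × M) ⊗[k] (C × M) :=
  TensorProduct.map (LinearMap.inl k C M) (LinearMap.inl k C M) ∘ₗ
      (ΔC ∘ₗ LinearMap.fst k C M + h ∘ₗ LinearMap.snd k C M)
    + TensorProduct.map (LinearMap.inr k C M) (LinearMap.inr k C M) ∘ₗ ΔM ∘ₗ LinearMap.snd k C M
    + TensorProduct.map (LinearMap.inr k C M) (LinearMap.inl k C M) ∘ₗ ρ ∘ₗ LinearMap.snd k C M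
    - TensorProduct.map (LinearMap.inl k C M) (LinearMap.inr k C M) ∘ₗ
        (TensorProduct.comm k M C).toLinearMap ∘ₗ ρ ∘ₗ LinearMap.snd k C M

/-- The operator `R_φ` on `C ⊕ M`. -/
def prodRB (RC : C →ₗ[k] C) (RM : M →ₗ[k] M) (φ : M →ₗ[k] C) :
    (C × M) →ₗ[k] (C × M) :=
  LinearMap.inl k C M ∘ₗ (RC ∘ₗ LinearMap.fst k C M + φ ∘ₗ LinearMap.snd k C M)
    + LinearMap.inr k C M ∘ₗ RM ∘ₗ LinearMap.snd k C M

/-- `(α,β)` is extensible with respect to the non-abelian extension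
`0 → C →f E →g M → 0`. -/
def Extensible (ΔE : E →ₗ[k] E ⊗[k] E) (RE : E →ₗ[k] E)
    (f : C →ₗ[k] E) (g : E →ₗ[k] M) (α : C →ₗ[k] C) (β : M →ₗ[k] M) : Prop :=
  ∃ γ : E →ₗ[k] E, IsHom ΔE RE ΔE RE γ ∧ Function.Bijective γ ∧
    Submodule.map γ (LinearMap.range f) = LinearMap.range f ∧
    γ ∘ₗ f = f ∘ₗ α ∧ g ∘ₗ γ = β ∘ₗ g

/-- `(h', ρ', φ')` differs from `(h, ρ, φ)` by the equivalence move associated to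
the linear map `s : M → C`. -/
def EquivVia (ΔC : C →ₗ[k] C ⊗[k] C) (RC : C →ₗ[k] C)
    (ΔM : M →ₗ[k] M ⊗[k] M) (RM : M →ₗ[k] M) (s : M →ₗ[k] C)
    (h : M →ₗ[k] C ⊗[k] C) (ρ : M →ₗ[k] M ⊗[k] C) (φ : M →ₗ[k] C)
    (h' : M →ₗ[k] C ⊗[k] C) (ρ' : M →ₗ[k] M ⊗[k] C) (φ' : M →ₗ[k] C) : Prop :=
  h' - h = TensorProduct.map s (LinearMap.id : C →ₗ[k] C) ∘ₗ ρ
      - (TensorProduct.comm k C C).toLinearMap ∘ₗ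
          TensorProduct.map s (LinearMap.id : C →ₗ[k] C) ∘ₗ ρ
      + TensorProduct.map s s ∘ₗ ΔM - ΔC ∘ₗ s ∧
  ρ' - ρ = lTensor M s ∘ₗ ΔM ∧
  φ' - φ = s ∘ₗ RM - RC ∘ₗ s

/-- Two non-abelian 2-cocycles are equivalent. -/
def CocEquiv (ΔC : C →ₗ[k] C ⊗[k] C) (RC : C →ₗ[k] C)
    (ΔM : M →ₗ[k] M ⊗[k] M) (RM : M →ₗ[k] M)
    (h : M →ₗ[k] C ⊗[k] C) (ρ : M →ₗ[k] M ⊗[k] C) (φ : M →ₗ[k] C)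
    (h' : M →ₗ[k] C ⊗[k] C) (ρ' : M →ₗ[k] M ⊗[k] C) (φ' : M →ₗ[k] C) : Prop :=
  ∃ s : M →ₗ[k] C, EquivVia ΔC RC ΔM RM s h ρ φ h' ρ' φ'


end

section

universe u

variable (k : Type*) [Field k]
variable (C M : Type u) [AddCommGroup C] [Module k C] [AddCommGroup M] [Module k M]
variable (lam : k) (ΔC : C →ₗ[k] C ⊗[k] C) (RC : C →ₗ[k] C)
variable (ΔM : M →ₗ[k] M ⊗[k] M) (RM : M →ₗ[k] M)

/-- A non-abelian extension of `(C, Δ_C, R_C)` by `(M, Δ_M, R_M)`. -/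
structure NAExt where
  E : Type u
  [abE : AddCommGroup E]
  [modE : Module k E]
  ΔE : E →ₗ[k] E ⊗[k] E
  RE : E →ₗ[k] E
  rblc : IsRBLC lam ΔE RE
  f : C →ₗ[k] E
  g : E →ₗ[k] M
  homf : IsHom ΔC RC ΔE RE f
  homg : IsHom ΔE RE ΔM RM g
  injf : Function.Injective f
  surjg : Function.Surjective g
  exact : LinearMap.range f = LinearMap.ker g

attribute [instance] NAExt.abE NAExt.modE

variable {k C M lam ΔC RC ΔM RM}

/-- Equivalence of non-abelian extensions. -/
def NAExtRel (X Y : NAExt k C M lam ΔC RC ΔM RM) : Prop :=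
  ∃ θ : X.E →ₗ[k] Y.E, IsHom X.ΔE X.RE Y.ΔE Y.RE θ ∧ Function.Bijective θ ∧
    θ ∘ₗ X.f = Y.f ∧ Y.g ∘ₗ θ = X.g

variable (k C M lam ΔC RC ΔM RM) in
/-- Bundled non-abelian 2-cocycles. -/
def Cocycle : Type _ :=
  {x : (M →ₗ[k] C ⊗[k] C) × (M →ₗ[k] M ⊗[k] C) × (M →ₗ[k] C) //
    NA2Cocycle lam ΔC RC ΔM RM x.1 x.2.1 x.2.2}

/-- Equivalence of non-abelian 2-cocycles. -/
def CocycleRel (x y : Cocycle k C M lam ΔC RC ΔM RM) : Prop :=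
  CocEquiv ΔC RC ΔM RM x.1.1 x.1.2.1 x.1.2.2 y.1.1 y.1.2.1 y.1.2.2

/-!
A retraction `t` of an extension `0 → C → E → M → 0` together with the projection `g` splits `E`
as `C ⊕ M`. In this splitting the cobracket and the operator of `E` consist of `Δ_C`, `R_C`,
`Δ_M`, `R_M` and the components `h`, `ρ`, `φ`, and conditions (1)–(6) are the axioms for `E` read
off componentwise: the Rota-Baxter axiom on `C ⊗ M` is the one on `M ⊗ C` by skewness, while the
co-Jacobiator of a skew cobracket is invariant under cyclic permutation of its three tensor
factors, so that it vanishes as soon as its components in `C ⊗ C ⊗ C`, `M ⊗ C ⊗ C`, `M ⊗ M ⊗ C`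
and `M ⊗ M ⊗ M` do. A linear map `θ : E → E'` under `C` and over `M` satisfies
`t' θ = t + s g` for some `s : M → C`, and it is a homomorphism exactly when `s` is an equivalence
between the induced cocycles. Taking `E' = E` shows that the class does not depend on `t`, and
equipping `C × M` with the structure having components `h`, `ρ`, `φ` inverts the assignment.
-/

section Tensor

variable {R : Type*} [CommRing R]
variable {U V W U' V' W' : Type*} [AddCommGroup U] [Module R U] [AddCommGroup V] [Module R V]
  [AddCommGroup W] [Module R W] [AddCommGroup U'] [Module R U'] [AddCommGroup V'] [Module R V']
  [AddCommGroup W'] [Module R W']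

variable (R U V W) in
/-- The cyclic permutation `u ⊗ (v ⊗ w) ↦ v ⊗ (w ⊗ u)` of a triple tensor product,
under which the co-Jacobiator of a skew cobracket is invariant. -/
noncomputable def tensorRotate : U ⊗[R] (V ⊗[R] W) ≃ₗ[R] V ⊗[R] (W ⊗[R] U) :=
  TensorProduct.comm R U (V ⊗[R] W) ≪≫ₗ TensorProduct.assoc R V W U

lemma map_tensorRotate (a : U →ₗ[R] U') (b : V →ₗ[R] V') (c : W →ₗ[R] W')
    (x : U ⊗[R] (V ⊗[R] W)) :
    TensorProduct.map b (TensorProduct.map c a) (tensorRotate R U V W x)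
      = tensorRotate R U' V' W' (TensorProduct.map a (TensorProduct.map b c) x) := by
  simp only [tensorRotate, LinearEquiv.trans_apply, TensorProduct.map_map_assoc,
    TensorProduct.map_comm]

lemma tensorRotate_tensorRotate_tensorRotate (x : U ⊗[R] (V ⊗[R] W)) :
    tensorRotate R W U V (tensorRotate R V W U (tensorRotate R U V W x)) = x := by
  suffices (tensorRotate R W U V).toLinearMap ∘ₗ (tensorRotate R V W U).toLinearMap ∘ₗ
      (tensorRotate R U V W).toLinearMap = LinearMap.id from LinearMap.congr_fun this x
  exact TensorProduct.ext_threefold' fun _ _ _ => rfl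

variable {f : U →ₗ[R] W} {t : W →ₗ[R] U} {i : V →ₗ[R] W} {g : W →ₗ[R] V}

lemma eq_zero_of_map_eq_zero (hid : f ∘ₗ t + i ∘ₗ g = LinearMap.id) {x : W ⊗[R] W}
    (htt : TensorProduct.map t t x = 0) (htg : TensorProduct.map t g x = 0)
    (hgt : TensorProduct.map g t x = 0) (hgg : TensorProduct.map g g x = 0) : x = 0 := by
  rw [← LinearMap.id_apply (R := R) x, ← TensorProduct.map_id, ← hid]
  simp only [TensorProduct.map_comp, TensorProduct.map_add_left, TensorProduct.map_add_right,
    LinearMap.add_apply, LinearMap.comp_apply, htt, htg, hgt, hgg, map_zero, add_zero]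

lemma eq_zero_of_map_map_eq_zero (hid : f ∘ₗ t + i ∘ₗ g = LinearMap.id)
    {x : W ⊗[R] (W ⊗[R] W)}
    (httt : TensorProduct.map t (TensorProduct.map t t) x = 0)
    (httg : TensorProduct.map t (TensorProduct.map t g) x = 0)
    (htgt : TensorProduct.map t (TensorProduct.map g t) x = 0)
    (htgg : TensorProduct.map t (TensorProduct.map g g) x = 0)
    (hgtt : TensorProduct.map g (TensorProduct.map t t) x = 0)
    (hgtg : TensorProduct.map g (TensorProduct.map t g) x = 0)
    (hggt : TensorProduct.map g (TensorProduct.map g t) x = 0)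
    (hggg : TensorProduct.map g (TensorProduct.map g g) x = 0) : x = 0 := by
  rw [← LinearMap.id_apply (R := R) x, ← TensorProduct.map_id, ← TensorProduct.map_id, ← hid]
  simp only [TensorProduct.map_comp, TensorProduct.map_add_left, TensorProduct.map_add_right,
    LinearMap.add_apply, LinearMap.comp_apply, httt, httg, htgt, htgg, hgtt, hgtg, hggt, hggg,
    map_zero, add_zero]

lemma eq_zero_of_comm_eq_neg (hid : f ∘ₗ t + i ∘ₗ g = LinearMap.id) {x : W ⊗[R] W}
    (hx : TensorProduct.comm R W W x = -x) (htt : TensorProduct.map t t x = 0)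
    (hgt : TensorProduct.map g t x = 0) (hgg : TensorProduct.map g g x = 0) : x = 0 := by
  refine eq_zero_of_map_eq_zero hid htt ?_ hgt hgg
  rw [← neg_eq_zero, ← map_neg, ← hx, TensorProduct.map_comm, hgt, map_zero]

lemma map_map_eq_zero_of_tensorRotate_eq_self {x : W ⊗[R] (W ⊗[R] W)}
    (hx : tensorRotate R W W W x = x) {a : W →ₗ[R] U'} {b : W →ₗ[R] V'} {c : W →ₗ[R] W'}
    (habc : TensorProduct.map a (TensorProduct.map b c) x = 0) :
    TensorProduct.map b (TensorProduct.map c a) x = 0 := by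
  rw [← hx, map_tensorRotate, habc, map_zero]

lemma eq_zero_of_tensorRotate_eq_self (hid : f ∘ₗ t + i ∘ₗ g = LinearMap.id)
    {x : W ⊗[R] (W ⊗[R] W)} (hx : tensorRotate R W W W x = x)
    (httt : TensorProduct.map t (TensorProduct.map t t) x = 0)
    (hgtt : TensorProduct.map g (TensorProduct.map t t) x = 0)
    (hggt : TensorProduct.map g (TensorProduct.map g t) x = 0)
    (hggg : TensorProduct.map g (TensorProduct.map g g) x = 0) : x = 0 := by
  have httg := map_map_eq_zero_of_tensorRotate_eq_self hx hgtt
  have htgt := map_map_eq_zero_of_tensorRotate_eq_self hx httg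
  have hgtg := map_map_eq_zero_of_tensorRotate_eq_self hx hggt
  have htgg := map_map_eq_zero_of_tensorRotate_eq_self hx hgtg
  exact eq_zero_of_map_map_eq_zero hid httt httg htgt htgg hgtt hgtg hggt hggg

lemma comm_eq_tensorRotate_tensorRotate_assoc (x : (U ⊗[R] V) ⊗[R] W) :
    TensorProduct.comm R (U ⊗[R] V) W x
      = tensorRotate R V W U (tensorRotate R U V W (TensorProduct.assoc R U V W x)) := by
  suffices (TensorProduct.comm R (U ⊗[R] V) W).toLinearMap
      = (tensorRotate R V W U).toLinearMap ∘ₗ (tensorRotate R U V W).toLinearMap ∘ₗ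
          (TensorProduct.assoc R U V W).toLinearMap from LinearMap.congr_fun this x
  exact TensorProduct.ext_threefold fun _ _ _ => rfl

lemma lTensor_comm_assoc_rTensor_comm (x : (U ⊗[R] V) ⊗[R] W) :
    lTensor V (TensorProduct.comm R U W).toLinearMap
        (TensorProduct.assoc R V U W (rTensor W (TensorProduct.comm R U V).toLinearMap x))
      = tensorRotate R U V W (TensorProduct.assoc R U V W x) := by
  suffices lTensor V (TensorProduct.comm R U W).toLinearMap ∘ₗ
      (TensorProduct.assoc R V U W).toLinearMap ∘ₗ
        rTensor W (TensorProduct.comm R U V).toLinearMap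
      = (tensorRotate R U V W).toLinearMap ∘ₗ (TensorProduct.assoc R U V W).toLinearMap from
    LinearMap.congr_fun this x
  exact TensorProduct.ext_threefold fun _ _ _ => rfl

end Tensor

section Defects

variable {R : Type*} [CommRing R]
variable {V U₁ U₂ U₃ : Type*} [AddCommGroup V] [Module R V] [AddCommGroup U₁] [Module R U₁]
  [AddCommGroup U₂] [Module R U₂] [AddCommGroup U₃] [Module R U₃]

/-- The co-Jacobiator of a cobracket `Δ`: the map whose vanishing is the co-Jacobi identity. -/
noncomputable def coJacobiator (Δ : V →ₗ[R] V ⊗[R] V) : V →ₗ[R] V ⊗[R] (V ⊗[R] V) :=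
  lTensor V Δ ∘ₗ Δ
    - (TensorProduct.assoc R V V V).toLinearMap ∘ₗ rTensor V Δ ∘ₗ Δ
    + lTensor V (TensorProduct.comm R V V).toLinearMap ∘ₗ
        (TensorProduct.assoc R V V V).toLinearMap ∘ₗ rTensor V Δ ∘ₗ Δ

/-- The map whose vanishing says that `P` is a Rota-Baxter operator of weight `w` on `(V, Δ)`. -/
noncomputable def rotaBaxterDefect (w : R) (Δ : V →ₗ[R] V ⊗[R] V) (P : V →ₗ[R] V) :
    V →ₗ[R] V ⊗[R] V :=
  TensorProduct.map P P ∘ₗ Δ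
    - (lTensor V P + rTensor V P + w • (LinearMap.id : V ⊗[R] V →ₗ[R] V ⊗[R] V)) ∘ₗ Δ ∘ₗ P

lemma map_comp_comm_comp_add (Δ : V →ₗ[R] V ⊗[R] V) (a : V →ₗ[R] U₁) (b : V →ₗ[R] U₂) :
    TensorProduct.map a b ∘ₗ ((TensorProduct.comm R V V).toLinearMap ∘ₗ Δ + Δ)
      = (TensorProduct.comm R U₂ U₁).toLinearMap ∘ₗ TensorProduct.map b a ∘ₗ Δ
        + TensorProduct.map a b ∘ₗ Δ := by
  rw [LinearMap.comp_add, ← LinearMap.comp_assoc, TensorProduct.map_comp_comm_eq,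
    LinearMap.comp_assoc]

lemma map_coJacobiator (Δ : V →ₗ[R] V ⊗[R] V) (a : V →ₗ[R] U₁) (b : V →ₗ[R] U₂)
    (c : V →ₗ[R] U₃) :
    TensorProduct.map a (TensorProduct.map b c) ∘ₗ coJacobiator Δ
      = TensorProduct.map a (TensorProduct.map b c ∘ₗ Δ) ∘ₗ Δ
        - (TensorProduct.assoc R U₁ U₂ U₃).toLinearMap ∘ₗ
            TensorProduct.map (TensorProduct.map a b ∘ₗ Δ) c ∘ₗ Δ
        + lTensor U₁ (TensorProduct.comm R U₃ U₂).toLinearMap ∘ₗ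
            (TensorProduct.assoc R U₁ U₃ U₂).toLinearMap ∘ₗ
              TensorProduct.map (TensorProduct.map a c ∘ₗ Δ) b ∘ₗ Δ := by
  have swap (x : V ⊗[R] (V ⊗[R] V)) : TensorProduct.map a (TensorProduct.map b c)
      (lTensor V (TensorProduct.comm R V V).toLinearMap x)
        = lTensor U₁ (TensorProduct.comm R U₃ U₂).toLinearMap
            (TensorProduct.map a (TensorProduct.map c b) x) := by
    rw [map_lTensor, TensorProduct.map_comp_comm_eq, ← lTensor_map]
  ext e
  simp only [coJacobiator, LinearMap.add_apply, LinearMap.sub_apply, LinearMap.comp_apply,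
    map_add, map_sub, LinearEquiv.coe_coe, swap, TensorProduct.map_map_assoc, map_lTensor,
    map_rTensor]

lemma map_rotaBaxterDefect (w : R) (Δ : V →ₗ[R] V ⊗[R] V) (P : V →ₗ[R] V) (a : V →ₗ[R] U₁)
    (b : V →ₗ[R] U₂) :
    TensorProduct.map a b ∘ₗ rotaBaxterDefect w Δ P
      = TensorProduct.map (a ∘ₗ P) (b ∘ₗ P) ∘ₗ Δ
        - (TensorProduct.map a (b ∘ₗ P) + TensorProduct.map (a ∘ₗ P) b
            + w • TensorProduct.map a b) ∘ₗ Δ ∘ₗ P := by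
  ext e
  simp only [rotaBaxterDefect, LinearMap.sub_apply, LinearMap.comp_apply, LinearMap.add_apply,
    LinearMap.smul_apply, LinearMap.id_apply, map_sub, map_add, map_smul, map_lTensor,
    map_rTensor, TensorProduct.map_map]

variable {Δ : V →ₗ[R] V ⊗[R] V}

lemma comm_apply_eq_neg_of_skew (hΔ : (TensorProduct.comm R V V).toLinearMap ∘ₗ Δ + Δ = 0)
    (e : V) : TensorProduct.comm R V V (Δ e) = -Δ e :=
  eq_neg_of_add_eq_zero_left (LinearMap.congr_fun hΔ e)

lemma comm_rotaBaxterDefect (hΔ : (TensorProduct.comm R V V).toLinearMap ∘ₗ Δ + Δ = 0) (w : R)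
    (P : V →ₗ[R] V) (e : V) :
    TensorProduct.comm R V V (rotaBaxterDefect w Δ P e) = -rotaBaxterDefect w Δ P e := by
  simp only [rotaBaxterDefect, lTensor, rTensor, LinearMap.sub_apply, LinearMap.comp_apply,
    LinearMap.add_apply, LinearMap.smul_apply, LinearMap.id_apply, map_sub, map_add, map_smul,
    ← TensorProduct.map_comm, comm_apply_eq_neg_of_skew hΔ, map_neg, smul_neg]
  abel

lemma lTensor_apply_of_skew (hΔ : (TensorProduct.comm R V V).toLinearMap ∘ₗ Δ + Δ = 0) (e : V) :
    lTensor V Δ (Δ e) = -tensorRotate R V V V (tensorRotate R V V V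
      (TensorProduct.assoc R V V V (rTensor V Δ (Δ e)))) := by
  rw [← comm_eq_tensorRotate_tensorRotate_assoc, ← lTensor_comm, comm_apply_eq_neg_of_skew hΔ,
    map_neg, neg_neg]

lemma lTensor_comm_assoc_of_skew (hΔ : (TensorProduct.comm R V V).toLinearMap ∘ₗ Δ + Δ = 0)
    (x : V ⊗[R] V) :
    lTensor V (TensorProduct.comm R V V).toLinearMap
        (TensorProduct.assoc R V V V (rTensor V Δ x))
      = -tensorRotate R V V V (TensorProduct.assoc R V V V (rTensor V Δ x)) := by
  have hΔ' : (TensorProduct.comm R V V).toLinearMap ∘ₗ Δ = -Δ := eq_neg_of_add_eq_zero_left hΔ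
  rw [← lTensor_comm_assoc_rTensor_comm, ← rTensor_comp_apply, hΔ', rTensor_neg]
  simp only [LinearMap.neg_apply, map_neg, neg_neg]

lemma coJacobiator_apply_of_skew (hΔ : (TensorProduct.comm R V V).toLinearMap ∘ₗ Δ + Δ = 0)
    (e : V) :
    coJacobiator Δ e
      = -(TensorProduct.assoc R V V V (rTensor V Δ (Δ e))
        + tensorRotate R V V V (TensorProduct.assoc R V V V (rTensor V Δ (Δ e)))
        + tensorRotate R V V V (tensorRotate R V V V
            (TensorProduct.assoc R V V V (rTensor V Δ (Δ e))))) := by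
  change lTensor V Δ (Δ e) - TensorProduct.assoc R V V V (rTensor V Δ (Δ e))
    + lTensor V (TensorProduct.comm R V V).toLinearMap
        (TensorProduct.assoc R V V V (rTensor V Δ (Δ e))) = _
  rw [lTensor_apply_of_skew hΔ, lTensor_comm_assoc_of_skew hΔ]
  abel

lemma tensorRotate_coJacobiator (hΔ : (TensorProduct.comm R V V).toLinearMap ∘ₗ Δ + Δ = 0)
    (e : V) :
    tensorRotate R V V V (coJacobiator Δ e) = coJacobiator Δ e := by
  rw [coJacobiator_apply_of_skew hΔ, map_neg, map_add, map_add,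
    tensorRotate_tensorRotate_tensorRotate]
  abel

end Defects

section Components

variable {R : Type*} [CommRing R] {C M E : Type*} [AddCommGroup C] [Module R C] [AddCommGroup M]
  [Module R M] [AddCommGroup E] [Module R E]

/-- The components of a cobracket `ΔE` and an operator `RE` on `E` with respect to maps
`t : E → C` and `g : E → M` that decompose `E` as `C ⊕ M`: the maps `h`, `ρ`, `φ` are the parts
not already given by the structures on `C` and `M`. The component `-τρ` in `C ⊗ M` is the one
forced by skewness of `ΔE`. -/
structure HasComponents (ΔC : C →ₗ[R] C ⊗[R] C) (RC : C →ₗ[R] C) (ΔM : M →ₗ[R] M ⊗[R] M)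
    (RM : M →ₗ[R] M) (ΔE : E →ₗ[R] E ⊗[R] E) (RE : E →ₗ[R] E) (t : E →ₗ[R] C) (g : E →ₗ[R] M)
    (h : M →ₗ[R] C ⊗[R] C) (ρ : M →ₗ[R] M ⊗[R] C) (φ : M →ₗ[R] C) : Prop where
  tt : TensorProduct.map t t ∘ₗ ΔE = ΔC ∘ₗ t + h ∘ₗ g
  gt : TensorProduct.map g t ∘ₗ ΔE = ρ ∘ₗ g
  tg : TensorProduct.map t g ∘ₗ ΔE = -((TensorProduct.comm R M C).toLinearMap ∘ₗ ρ ∘ₗ g)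
  gg : TensorProduct.map g g ∘ₗ ΔE = ΔM ∘ₗ g
  tR : t ∘ₗ RE = RC ∘ₗ t + φ ∘ₗ g
  gR : g ∘ₗ RE = RM ∘ₗ g

lemma sub_comp_eq_zero_iff {V : Type*} [AddCommGroup V] [Module R V] {g : E →ₗ[R] M}
    (hg : Function.Surjective g) {F G : M →ₗ[R] V} : F ∘ₗ g - G ∘ₗ g = 0 ↔ F = G := by
  rw [sub_eq_zero, LinearMap.cancel_right hg]

namespace HasComponents

variable {w : R} {ΔC : C →ₗ[R] C ⊗[R] C} {RC : C →ₗ[R] C} {ΔM : M →ₗ[R] M ⊗[R] M}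
  {RM : M →ₗ[R] M} {ΔE : E →ₗ[R] E ⊗[R] E} {RE : E →ₗ[R] E} {t : E →ₗ[R] C} {g : E →ₗ[R] M}
  {h : M →ₗ[R] C ⊗[R] C} {ρ : M →ₗ[R] M ⊗[R] C} {φ : M →ₗ[R] C}

lemma comm_comp_add_eq_zero_iff (S : HasComponents ΔC RC ΔM RM ΔE RE t g h ρ φ)
    (hC : (TensorProduct.comm R C C).toLinearMap ∘ₗ ΔC + ΔC = 0)
    (hM : (TensorProduct.comm R M M).toLinearMap ∘ₗ ΔM + ΔM = 0)
    {f : C →ₗ[R] E} {i : M →ₗ[R] E} (hid : f ∘ₗ t + i ∘ₗ g = LinearMap.id)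
    (hg : Function.Surjective g) :
    (TensorProduct.comm R E E).toLinearMap ∘ₗ ΔE + ΔE = 0
      ↔ (TensorProduct.comm R C C).toLinearMap ∘ₗ h + h = 0 := by
  have htt : TensorProduct.map t t ∘ₗ ((TensorProduct.comm R E E).toLinearMap ∘ₗ ΔE + ΔE)
      = ((TensorProduct.comm R C C).toLinearMap ∘ₗ h + h) ∘ₗ g := by
    have hCt := congrArg (· ∘ₗ t) hC
    simp only [LinearMap.add_comp, LinearMap.zero_comp, LinearMap.comp_assoc] at hCt
    rw [map_comp_comm_comp_add, S.tt, LinearMap.comp_add, LinearMap.add_comp,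
      LinearMap.comp_assoc]
    linear_combination (norm := module) hCt
  refine ⟨fun hE => ?_, fun h1 => LinearMap.ext fun e => eq_zero_of_map_eq_zero hid ?_ ?_ ?_ ?_⟩
  · rwa [hE, LinearMap.comp_zero, eq_comm, ← LinearMap.zero_comp g,
      LinearMap.cancel_right hg] at htt
  all_goals rw [← LinearMap.comp_apply]
  · rw [htt, h1, LinearMap.zero_comp, LinearMap.zero_apply]
  · rw [map_comp_comm_comp_add, S.gt, S.tg, add_neg_cancel, LinearMap.zero_apply]
  · rw [map_comp_comm_comp_add, S.gt, S.tg, LinearMap.comp_neg, TensorProduct.comm_comp_comm_assoc,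
      neg_add_cancel, LinearMap.zero_apply]
  · rw [map_comp_comm_comp_add, S.gg, ← LinearMap.comp_assoc, ← LinearMap.add_comp, hM,
      LinearMap.zero_comp, LinearMap.zero_apply]

lemma map_ttt_coJacobiator_eq_zero_iff (S : HasComponents ΔC RC ΔM RM ΔE RE t g h ρ φ)
    (hC : coJacobiator ΔC = 0) (hg : Function.Surjective g) :
    TensorProduct.map t (TensorProduct.map t t) ∘ₗ coJacobiator ΔE = 0
      ↔ lTensor C ΔC ∘ₗ h
          - (TensorProduct.assoc R C C C).toLinearMap ∘ₗ rTensor C ΔC ∘ₗ h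
          + lTensor C (TensorProduct.comm R C C).toLinearMap ∘ₗ
              (TensorProduct.assoc R C C C).toLinearMap ∘ₗ rTensor C ΔC ∘ₗ h
        = (TensorProduct.assoc R C C C).toLinearMap ∘ₗ rTensor C h ∘ₗ ρ
          + lTensor C h ∘ₗ (TensorProduct.comm R M C).toLinearMap ∘ₗ ρ
          - lTensor C (TensorProduct.comm R C C).toLinearMap ∘ₗ
              (TensorProduct.assoc R C C C).toLinearMap ∘ₗ rTensor C h ∘ₗ ρ := by
  have hJ : coJacobiator ΔC ∘ₗ t = 0 := by rw [hC, LinearMap.zero_comp]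
  simp only [coJacobiator, LinearMap.add_comp, LinearMap.sub_comp, LinearMap.comp_assoc] at hJ
  rw [← sub_comp_eq_zero_iff hg, map_coJacobiator, S.tt]
  simp only [TensorProduct.map_add_right, TensorProduct.map_add_left, ← lTensor_comp_map,
    ← rTensor_comp_map, LinearMap.add_comp, LinearMap.comp_add, LinearMap.sub_comp,
    LinearMap.comp_neg, LinearMap.comp_assoc, S.tt, S.tg, S.gt]
  exact Eq.congr_left (by linear_combination (norm := module) hJ)

lemma map_gtt_coJacobiator_eq_zero_iff (S : HasComponents ΔC RC ΔM RM ΔE RE t g h ρ φ)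
    (hg : Function.Surjective g) :
    TensorProduct.map g (TensorProduct.map t t) ∘ₗ coJacobiator ΔE = 0
      ↔ lTensor M ΔC ∘ₗ ρ + lTensor M h ∘ₗ ΔM
        = (TensorProduct.assoc R M C C).toLinearMap ∘ₗ rTensor C ρ ∘ₗ ρ
          - lTensor M (TensorProduct.comm R C C).toLinearMap ∘ₗ
              (TensorProduct.assoc R M C C).toLinearMap ∘ₗ rTensor C ρ ∘ₗ ρ := by
  rw [← sub_comp_eq_zero_iff hg, map_coJacobiator, S.tt, S.gt]
  simp only [TensorProduct.map_add_right, ← lTensor_comp_map, ← rTensor_comp_map,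
    LinearMap.add_comp, LinearMap.sub_comp, LinearMap.comp_assoc, S.gt, S.gg]
  exact Eq.congr_left (by abel)

lemma map_ggt_coJacobiator_eq_zero_iff (S : HasComponents ΔC RC ΔM RM ΔE RE t g h ρ φ)
    (hg : Function.Surjective g) :
    TensorProduct.map g (TensorProduct.map g t) ∘ₗ coJacobiator ΔE = 0
      ↔ (TensorProduct.assoc R M M C).toLinearMap ∘ₗ rTensor C ΔM ∘ₗ ρ
        = lTensor M (TensorProduct.comm R C M).toLinearMap ∘ₗ
            (TensorProduct.assoc R M C M).toLinearMap ∘ₗ rTensor M ρ ∘ₗ ΔM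
          + lTensor M ρ ∘ₗ ΔM := by
  rw [← sub_comp_eq_zero_iff hg, ← neg_eq_zero, map_coJacobiator, S.gt, S.gg]
  simp only [← lTensor_comp_map, ← rTensor_comp_map, LinearMap.add_comp, LinearMap.comp_assoc,
    S.gt, S.gg]
  exact Eq.congr_left (by abel)

lemma map_ggg_coJacobiator (S : HasComponents ΔC RC ΔM RM ΔE RE t g h ρ φ) :
    TensorProduct.map g (TensorProduct.map g g) ∘ₗ coJacobiator ΔE = coJacobiator ΔM ∘ₗ g := by
  rw [map_coJacobiator, S.gg]
  simp only [coJacobiator, ← lTensor_comp_map, ← rTensor_comp_map, LinearMap.add_comp,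
    LinearMap.sub_comp, LinearMap.comp_assoc, S.gg]

lemma map_tt_comp_comp (S : HasComponents ΔC RC ΔM RM ΔE RE t g h ρ φ) :
    TensorProduct.map t t ∘ₗ ΔE ∘ₗ RE = ΔC ∘ₗ RC ∘ₗ t + ΔC ∘ₗ φ ∘ₗ g + h ∘ₗ RM ∘ₗ g := by
  rw [← LinearMap.comp_assoc, S.tt, LinearMap.add_comp, LinearMap.comp_assoc,
    LinearMap.comp_assoc, S.tR, S.gR, LinearMap.comp_add]

lemma map_gt_comp_comp (S : HasComponents ΔC RC ΔM RM ΔE RE t g h ρ φ) :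
    TensorProduct.map g t ∘ₗ ΔE ∘ₗ RE = ρ ∘ₗ RM ∘ₗ g := by
  rw [← LinearMap.comp_assoc, S.gt, LinearMap.comp_assoc, S.gR]

lemma map_tg_comp_comp (S : HasComponents ΔC RC ΔM RM ΔE RE t g h ρ φ) :
    TensorProduct.map t g ∘ₗ ΔE ∘ₗ RE
      = -((TensorProduct.comm R M C).toLinearMap ∘ₗ ρ ∘ₗ RM ∘ₗ g) := by
  rw [← LinearMap.comp_assoc, S.tg, LinearMap.neg_comp, LinearMap.comp_assoc,
    LinearMap.comp_assoc, S.gR]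

lemma map_gg_comp_comp (S : HasComponents ΔC RC ΔM RM ΔE RE t g h ρ φ) :
    TensorProduct.map g g ∘ₗ ΔE ∘ₗ RE = ΔM ∘ₗ RM ∘ₗ g := by
  rw [← LinearMap.comp_assoc, S.gg, LinearMap.comp_assoc, S.gR]

lemma map_tt_rotaBaxterDefect_eq_zero_iff (S : HasComponents ΔC RC ΔM RM ΔE RE t g h ρ φ)
    (hC : rotaBaxterDefect w ΔC RC = 0) (hg : Function.Surjective g) :
    TensorProduct.map t t ∘ₗ rotaBaxterDefect w ΔE RE = 0
      ↔ TensorProduct.map φ RC ∘ₗ ρ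
          - TensorProduct.map RC φ ∘ₗ (TensorProduct.comm R M C).toLinearMap ∘ₗ ρ
          - rTensor C φ ∘ₗ ρ ∘ₗ RM
          + lTensor C φ ∘ₗ (TensorProduct.comm R M C).toLinearMap ∘ₗ ρ ∘ₗ RM
          + TensorProduct.map φ φ ∘ₗ ΔM
          - (lTensor C RC + rTensor C RC
              + w • (LinearMap.id : C ⊗[R] C →ₗ[R] C ⊗[R] C)) ∘ₗ ΔC ∘ₗ φ
        = (rTensor C RC + lTensor C RC
            + w • (LinearMap.id : C ⊗[R] C →ₗ[R] C ⊗[R] C)) ∘ₗ h ∘ₗ RM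
          - TensorProduct.map RC RC ∘ₗ h := by
  have hR : rotaBaxterDefect w ΔC RC ∘ₗ t = 0 := by rw [hC, LinearMap.zero_comp]
  simp only [rotaBaxterDefect, LinearMap.add_comp, LinearMap.sub_comp, LinearMap.smul_comp,
    LinearMap.id_comp, LinearMap.comp_assoc] at hR
  rw [← sub_comp_eq_zero_iff hg, map_rotaBaxterDefect, S.tR]
  simp only [TensorProduct.map_add_right, TensorProduct.map_add_left, TensorProduct.map_comp]
  simp only [← lTensor_comp_map, ← rTensor_comp_map, LinearMap.add_comp, LinearMap.comp_add,
    LinearMap.sub_comp, LinearMap.smul_comp, LinearMap.id_comp, LinearMap.comp_neg,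
    LinearMap.comp_assoc, S.tt, S.tg, S.gt, S.gg, S.map_tt_comp_comp, S.map_gt_comp_comp,
    S.map_tg_comp_comp]
  exact Eq.congr_left (by linear_combination (norm := module) hR)

lemma map_gt_rotaBaxterDefect_eq_zero_iff (S : HasComponents ΔC RC ΔM RM ΔE RE t g h ρ φ)
    (hg : Function.Surjective g) :
    TensorProduct.map g t ∘ₗ rotaBaxterDefect w ΔE RE = 0
      ↔ TensorProduct.map RM φ ∘ₗ ΔM + TensorProduct.map RM RC ∘ₗ ρ
        = lTensor M φ ∘ₗ ΔM ∘ₗ RM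
          + (lTensor M RC + rTensor C RM
              + w • (LinearMap.id : M ⊗[R] C →ₗ[R] M ⊗[R] C)) ∘ₗ ρ ∘ₗ RM := by
  rw [← sub_comp_eq_zero_iff hg, map_rotaBaxterDefect, S.tR, S.gR]
  simp only [TensorProduct.map_add_right, TensorProduct.map_comp]
  simp only [← lTensor_comp_map, ← rTensor_comp_map, LinearMap.add_comp,
    LinearMap.smul_comp, LinearMap.id_comp, LinearMap.comp_assoc, S.gt, S.gg,
    S.map_gt_comp_comp, S.map_gg_comp_comp]
  exact Eq.congr_left (by abel)

lemma map_gg_rotaBaxterDefect (S : HasComponents ΔC RC ΔM RM ΔE RE t g h ρ φ) :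
    TensorProduct.map g g ∘ₗ rotaBaxterDefect w ΔE RE = rotaBaxterDefect w ΔM RM ∘ₗ g := by
  rw [map_rotaBaxterDefect, S.gR]
  simp only [TensorProduct.map_comp]
  simp only [rotaBaxterDefect, ← lTensor_comp_map, ← rTensor_comp_map, LinearMap.add_comp,
    LinearMap.sub_comp, LinearMap.smul_comp, LinearMap.id_comp, LinearMap.comp_assoc, S.gg,
    S.map_gg_comp_comp]

lemma coJacobiator_eq_zero_iff (S : HasComponents ΔC RC ΔM RM ΔE RE t g h ρ φ)
    (hE : (TensorProduct.comm R E E).toLinearMap ∘ₗ ΔE + ΔE = 0)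
    (hM : coJacobiator ΔM = 0) {f : C →ₗ[R] E} {i : M →ₗ[R] E}
    (hid : f ∘ₗ t + i ∘ₗ g = LinearMap.id) :
    coJacobiator ΔE = 0
      ↔ TensorProduct.map t (TensorProduct.map t t) ∘ₗ coJacobiator ΔE = 0
      ∧ TensorProduct.map g (TensorProduct.map t t) ∘ₗ coJacobiator ΔE = 0
      ∧ TensorProduct.map g (TensorProduct.map g t) ∘ₗ coJacobiator ΔE = 0 := by
  have hggg := S.map_ggg_coJacobiator
  rw [hM, LinearMap.zero_comp] at hggg
  refine ⟨fun hJ => by simp only [hJ, LinearMap.comp_zero, and_self],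
    fun ⟨httt, hgtt, hggt⟩ => LinearMap.ext fun e => ?_⟩
  exact eq_zero_of_tensorRotate_eq_self hid (tensorRotate_coJacobiator hE e)
    (LinearMap.congr_fun httt e) (LinearMap.congr_fun hgtt e) (LinearMap.congr_fun hggt e)
    (LinearMap.congr_fun hggg e)

lemma rotaBaxterDefect_eq_zero_iff (S : HasComponents ΔC RC ΔM RM ΔE RE t g h ρ φ)
    (hE : (TensorProduct.comm R E E).toLinearMap ∘ₗ ΔE + ΔE = 0)
    (hM : rotaBaxterDefect w ΔM RM = 0) {f : C →ₗ[R] E} {i : M →ₗ[R] E}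
    (hid : f ∘ₗ t + i ∘ₗ g = LinearMap.id) :
    rotaBaxterDefect w ΔE RE = 0
      ↔ TensorProduct.map t t ∘ₗ rotaBaxterDefect w ΔE RE = 0
      ∧ TensorProduct.map g t ∘ₗ rotaBaxterDefect w ΔE RE = 0 := by
  have hgg := S.map_gg_rotaBaxterDefect (w := w)
  rw [hM, LinearMap.zero_comp] at hgg
  refine ⟨fun hR => by simp only [hR, LinearMap.comp_zero, and_self],
    fun ⟨htt, hgt⟩ => LinearMap.ext fun e => ?_⟩
  exact eq_zero_of_comm_eq_neg hid (comm_rotaBaxterDefect hE w RE e)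
    (LinearMap.congr_fun htt e) (LinearMap.congr_fun hgt e) (LinearMap.congr_fun hgg e)

end HasComponents

end Components

section Homs

variable {R : Type*} [CommRing R] {C M E E' : Type*} [AddCommGroup C] [Module R C]
  [AddCommGroup M] [Module R M] [AddCommGroup E] [Module R E] [AddCommGroup E'] [Module R E']
  {ΔC : C →ₗ[R] C ⊗[R] C} {RC : C →ₗ[R] C} {ΔM : M →ₗ[R] M ⊗[R] M} {RM : M →ₗ[R] M}
  {ΔE : E →ₗ[R] E ⊗[R] E} {RE : E →ₗ[R] E} {t : E →ₗ[R] C} {g : E →ₗ[R] M}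
  {h : M →ₗ[R] C ⊗[R] C} {ρ : M →ₗ[R] M ⊗[R] C} {φ : M →ₗ[R] C}
  {ΔE' : E' →ₗ[R] E' ⊗[R] E'} {RE' : E' →ₗ[R] E'} {t' : E' →ₗ[R] C} {g' : E' →ₗ[R] M}
  {h' : M →ₗ[R] C ⊗[R] C} {ρ' : M →ₗ[R] M ⊗[R] C} {φ' : M →ₗ[R] C}
  {θ : E →ₗ[R] E'} {s : M →ₗ[R] C}

namespace HasComponents

lemma map_tt_map_sub_eq_zero_iff (S : HasComponents ΔC RC ΔM RM ΔE RE t g h ρ φ)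
    (S' : HasComponents ΔC RC ΔM RM ΔE' RE' t' g' h' ρ' φ') (hg : Function.Surjective g)
    (htθ : t' ∘ₗ θ = t + s ∘ₗ g) (hgθ : g' ∘ₗ θ = g) :
    TensorProduct.map t' t' ∘ₗ (TensorProduct.map θ θ ∘ₗ ΔE - ΔE' ∘ₗ θ) = 0
      ↔ h' - h = rTensor C s ∘ₗ ρ - (TensorProduct.comm R C C).toLinearMap ∘ₗ rTensor C s ∘ₗ ρ
          + TensorProduct.map s s ∘ₗ ΔM - ΔC ∘ₗ s := by
  have hcomm : (TensorProduct.comm R C C).toLinearMap ∘ₗ rTensor C s ∘ₗ ρ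
      = lTensor C s ∘ₗ (TensorProduct.comm R M C).toLinearMap ∘ₗ ρ :=
    congrArg (· ∘ₗ ρ) (TensorProduct.map_comp_comm_eq LinearMap.id s).symm
  rw [← sub_comp_eq_zero_iff hg, ← neg_eq_zero, LinearMap.comp_sub, ← LinearMap.comp_assoc,
    ← LinearMap.comp_assoc, ← TensorProduct.map_comp, S'.tt, htθ, hcomm]
  simp only [TensorProduct.map_add_right, TensorProduct.map_add_left, TensorProduct.map_comp]
  simp only [← lTensor_comp_map, ← rTensor_comp_map, LinearMap.add_comp, LinearMap.comp_add,
    LinearMap.sub_comp, LinearMap.comp_neg, LinearMap.comp_assoc, S.tt, S.tg, S.gt, S.gg, htθ, hgθ]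
  exact Eq.congr_left (by abel)

lemma map_gt_map_sub_eq_zero_iff (S : HasComponents ΔC RC ΔM RM ΔE RE t g h ρ φ)
    (S' : HasComponents ΔC RC ΔM RM ΔE' RE' t' g' h' ρ' φ') (hg : Function.Surjective g)
    (htθ : t' ∘ₗ θ = t + s ∘ₗ g) (hgθ : g' ∘ₗ θ = g) :
    TensorProduct.map g' t' ∘ₗ (TensorProduct.map θ θ ∘ₗ ΔE - ΔE' ∘ₗ θ) = 0
      ↔ ρ' - ρ = lTensor M s ∘ₗ ΔM := by
  rw [← sub_comp_eq_zero_iff hg, ← neg_eq_zero, LinearMap.comp_sub, ← LinearMap.comp_assoc,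
    ← LinearMap.comp_assoc, ← TensorProduct.map_comp, S'.gt, htθ, hgθ]
  simp only [TensorProduct.map_add_right, ← lTensor_comp_map, LinearMap.add_comp,
    LinearMap.sub_comp, LinearMap.comp_assoc, S.gt, S.gg, hgθ]
  exact Eq.congr_left (by abel)

lemma map_gg_map_sub (S : HasComponents ΔC RC ΔM RM ΔE RE t g h ρ φ)
    (S' : HasComponents ΔC RC ΔM RM ΔE' RE' t' g' h' ρ' φ') (hgθ : g' ∘ₗ θ = g) :
    TensorProduct.map g' g' ∘ₗ (TensorProduct.map θ θ ∘ₗ ΔE - ΔE' ∘ₗ θ) = 0 := by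
  rw [LinearMap.comp_sub, ← LinearMap.comp_assoc, ← LinearMap.comp_assoc,
    ← TensorProduct.map_comp, S'.gg, hgθ, S.gg, LinearMap.comp_assoc, hgθ, sub_self]

lemma map_comp_eq_comp_iff (S : HasComponents ΔC RC ΔM RM ΔE RE t g h ρ φ)
    (S' : HasComponents ΔC RC ΔM RM ΔE' RE' t' g' h' ρ' φ') (hg : Function.Surjective g)
    (hE : (TensorProduct.comm R E E).toLinearMap ∘ₗ ΔE + ΔE = 0)
    (hE' : (TensorProduct.comm R E' E').toLinearMap ∘ₗ ΔE' + ΔE' = 0)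
    {f' : C →ₗ[R] E'} {i' : M →ₗ[R] E'} (hid' : f' ∘ₗ t' + i' ∘ₗ g' = LinearMap.id)
    (htθ : t' ∘ₗ θ = t + s ∘ₗ g) (hgθ : g' ∘ₗ θ = g) :
    TensorProduct.map θ θ ∘ₗ ΔE = ΔE' ∘ₗ θ
      ↔ h' - h = rTensor C s ∘ₗ ρ - (TensorProduct.comm R C C).toLinearMap ∘ₗ rTensor C s ∘ₗ ρ
          + TensorProduct.map s s ∘ₗ ΔM - ΔC ∘ₗ s
        ∧ ρ' - ρ = lTensor M s ∘ₗ ΔM := by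
  rw [← S.map_tt_map_sub_eq_zero_iff S' hg htθ hgθ, ← S.map_gt_map_sub_eq_zero_iff S' hg htθ hgθ,
    ← sub_eq_zero]
  refine ⟨fun hθ => by simp only [hθ, LinearMap.comp_zero, and_self],
    fun ⟨htt, hgt⟩ => LinearMap.ext fun e => eq_zero_of_comm_eq_neg hid' ?_
      (LinearMap.congr_fun htt e) (LinearMap.congr_fun hgt e)
      (LinearMap.congr_fun (S.map_gg_map_sub S' hgθ) e)⟩
  rw [LinearMap.sub_apply, map_sub, LinearMap.comp_apply, LinearMap.comp_apply,
    ← TensorProduct.map_comm, comm_apply_eq_neg_of_skew hE,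
    comm_apply_eq_neg_of_skew hE', map_neg]
  abel

lemma comp_eq_comp_iff (S : HasComponents ΔC RC ΔM RM ΔE RE t g h ρ φ)
    (S' : HasComponents ΔC RC ΔM RM ΔE' RE' t' g' h' ρ' φ') (hg : Function.Surjective g)
    {f' : C →ₗ[R] E'} {i' : M →ₗ[R] E'} (hid' : f' ∘ₗ t' + i' ∘ₗ g' = LinearMap.id)
    (htθ : t' ∘ₗ θ = t + s ∘ₗ g) (hgθ : g' ∘ₗ θ = g) :
    RE' ∘ₗ θ = θ ∘ₗ RE ↔ φ' - φ = s ∘ₗ RM - RC ∘ₗ s := by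
  have ht : t' ∘ₗ (RE' ∘ₗ θ - θ ∘ₗ RE) = (φ' - φ - (s ∘ₗ RM - RC ∘ₗ s)) ∘ₗ g := by
    rw [LinearMap.comp_sub, ← LinearMap.comp_assoc, ← LinearMap.comp_assoc, S'.tR, htθ]
    simp only [LinearMap.add_comp, LinearMap.comp_add, LinearMap.sub_comp, LinearMap.comp_assoc,
      S.tR, S.gR, htθ, hgθ]
    abel
  have hg' : g' ∘ₗ (RE' ∘ₗ θ - θ ∘ₗ RE) = 0 := by
    rw [LinearMap.comp_sub, ← LinearMap.comp_assoc, ← LinearMap.comp_assoc, S'.gR, hgθ, S.gR,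
      LinearMap.comp_assoc, hgθ, sub_self]
  rw [← sub_eq_zero, ← sub_eq_zero (a := φ' - φ), ← LinearMap.cancel_right hg,
    LinearMap.zero_comp, ← ht]
  refine ⟨fun hθ => by rw [hθ, LinearMap.comp_zero], fun ht => ?_⟩
  rw [← LinearMap.id_comp (RE' ∘ₗ θ - θ ∘ₗ RE), ← hid', LinearMap.add_comp, LinearMap.comp_assoc,
    LinearMap.comp_assoc, ht, hg', LinearMap.comp_zero, LinearMap.comp_zero, add_zero]

end HasComponents

end Homs

section RotaBaxter

variable {E E' : Type*} [AddCommGroup E] [Module k E] [AddCommGroup E'] [Module k E']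
  {ΔE : E →ₗ[k] E ⊗[k] E} {RE : E →ₗ[k] E} {t : E →ₗ[k] C} {g : E →ₗ[k] M}
  {h : M →ₗ[k] C ⊗[k] C} {ρ : M →ₗ[k] M ⊗[k] C} {φ : M →ₗ[k] C}

lemma coAnti_iff : CoAnti ΔE ↔ (TensorProduct.comm k E E).toLinearMap ∘ₗ ΔE + ΔE = 0 := by
  rw [CoAnti, eq_neg_iff_add_eq_zero, add_comm]

lemma isRBLC_iff :
    IsRBLC lam ΔE RE ↔ (TensorProduct.comm k E E).toLinearMap ∘ₗ ΔE + ΔE = 0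
      ∧ coJacobiator ΔE = 0 ∧ rotaBaxterDefect lam ΔE RE = 0 := by
  rw [IsRBLC, coAnti_iff]
  exact and_congr_right' (and_congr_right' sub_eq_zero.symm)

lemma HasComponents.isRBLC_iff_na2Cocycle (S : HasComponents ΔC RC ΔM RM ΔE RE t g h ρ φ)
    (hC : IsRBLC lam ΔC RC) (hM : IsRBLC lam ΔM RM) {f : C →ₗ[k] E} {i : M →ₗ[k] E}
    (hid : f ∘ₗ t + i ∘ₗ g = LinearMap.id) (hg : Function.Surjective g) :
    IsRBLC lam ΔE RE ↔ NA2Cocycle lam ΔC RC ΔM RM h ρ φ := by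
  obtain ⟨hC1, hC2, hC3⟩ := isRBLC_iff.1 hC
  obtain ⟨hM1, hM2, hM3⟩ := isRBLC_iff.1 hM
  rw [isRBLC_iff, NA2Cocycle, ← S.comm_comp_add_eq_zero_iff hC1 hM1 hid hg]
  refine and_congr_right fun hE => ?_
  rw [S.coJacobiator_eq_zero_iff hE hM2 hid, S.rotaBaxterDefect_eq_zero_iff hE hM3 hid,
    S.map_ttt_coJacobiator_eq_zero_iff hC2 hg, S.map_gtt_coJacobiator_eq_zero_iff hg,
    S.map_ggt_coJacobiator_eq_zero_iff hg, S.map_tt_rotaBaxterDefect_eq_zero_iff hC3 hg,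
    S.map_gt_rotaBaxterDefect_eq_zero_iff hg, and_assoc, and_assoc]
  rfl

lemma HasComponents.isHom_iff_equivVia (S : HasComponents ΔC RC ΔM RM ΔE RE t g h ρ φ)
    {ΔE' : E' →ₗ[k] E' ⊗[k] E'} {RE' : E' →ₗ[k] E'} {t' : E' →ₗ[k] C} {g' : E' →ₗ[k] M}
    {h' : M →ₗ[k] C ⊗[k] C} {ρ' : M →ₗ[k] M ⊗[k] C} {φ' : M →ₗ[k] C}
    (S' : HasComponents ΔC RC ΔM RM ΔE' RE' t' g' h' ρ' φ') (hg : Function.Surjective g)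
    (hE : CoAnti ΔE) (hE' : CoAnti ΔE') {f' : C →ₗ[k] E'} {i' : M →ₗ[k] E'}
    (hid' : f' ∘ₗ t' + i' ∘ₗ g' = LinearMap.id) {θ : E →ₗ[k] E'} {s : M →ₗ[k] C}
    (htθ : t' ∘ₗ θ = t + s ∘ₗ g) (hgθ : g' ∘ₗ θ = g) :
    IsHom ΔE RE ΔE' RE' θ ↔ EquivVia ΔC RC ΔM RM s h ρ φ h' ρ' φ' := by
  rw [IsHom, EquivVia,
    S.map_comp_eq_comp_iff S' hg (coAnti_iff.1 hE) (coAnti_iff.1 hE') hid' htθ hgθ,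
    S.comp_eq_comp_iff S' hg hid' htθ hgθ, and_assoc]
  rfl

lemma hasComponents_prod (ΔC : C →ₗ[k] C ⊗[k] C) (RC : C →ₗ[k] C) (ΔM : M →ₗ[k] M ⊗[k] M)
    (RM : M →ₗ[k] M) (h : M →ₗ[k] C ⊗[k] C) (ρ : M →ₗ[k] M ⊗[k] C) (φ : M →ₗ[k] C) :
    HasComponents ΔC RC ΔM RM (prodCobra ΔC ΔM h ρ) (prodRB RC RM φ)
      (LinearMap.fst k C M) (LinearMap.snd k C M) h ρ φ := by
  constructor <;> refine LinearMap.ext fun e => ?_ <;>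
    simp [prodCobra, prodRB, TensorProduct.map_map]

end RotaBaxter

section Splitting

variable {R : Type*} [CommRing R]
variable {U V W : Type*} [AddCommGroup U] [Module R U] [AddCommGroup V] [Module R V]
  [AddCommGroup W] [Module R W]
  {f : U →ₗ[R] W} {g : W →ₗ[R] V} {t : W →ₗ[R] U}

lemma exists_linearEquiv_prod_of_retraction (hfg : Function.Exact f g)
    (hg : Function.Surjective g) (ht : t ∘ₗ f = LinearMap.id) :
    ∃ e : W ≃ₗ[R] U × V, LinearMap.fst R U V ∘ₗ e = t ∧ LinearMap.snd R U V ∘ₗ e = g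
      ∧ e.symm ∘ₗ LinearMap.inl R U V = f :=
  have he := (hfg.splitInjectiveEquiv hg ⟨t, ht⟩).2
  ⟨_, rfl, he.2.symm, he.1.symm⟩

lemma exists_comp_add_comp_eq_id (hfg : Function.Exact f g) (hg : Function.Surjective g)
    (ht : t ∘ₗ f = LinearMap.id) : ∃ i : V →ₗ[R] W, f ∘ₗ t + i ∘ₗ g = LinearMap.id := by
  obtain ⟨e, rfl, rfl, rfl⟩ := exists_linearEquiv_prod_of_retraction hfg hg ht
  refine ⟨e.symm ∘ₗ LinearMap.inr R U V, LinearMap.ext fun x => e.injective ?_⟩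
  simp

lemma exists_comp_eq_of_comp_eq_zero {V' : Type*} [AddCommGroup V'] [Module R V']
    (hfg : Function.Exact f g) (hg : Function.Surjective g) {F : W →ₗ[R] V'}
    (hF : F ∘ₗ f = 0) : ∃ G : V →ₗ[R] V', G ∘ₗ g = F := by
  refine ⟨(LinearMap.range f).liftQ F (LinearMap.range_le_ker_iff.2 hF) ∘ₗ
    (hfg.linearEquivOfSurjective hg).symm, LinearMap.ext fun x => ?_⟩
  have hx : (hfg.linearEquivOfSurjective hg).symm (g x) = Submodule.Quotient.mk x :=
    (LinearEquiv.symm_apply_eq _).2 rfl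
  rw [LinearMap.comp_apply, LinearMap.comp_apply, LinearEquiv.coe_coe, hx, Submodule.liftQ_apply]

end Splitting

section Extensions

namespace NAExt

lemma exact_f_g (X : NAExt k C M lam ΔC RC ΔM RM) : Function.Exact X.f X.g :=
  LinearMap.exact_iff.2 X.exact.symm

lemma hasComponents (X : NAExt k C M lam ΔC RC ΔM RM) {t : X.E →ₗ[k] C}
    {h : M →ₗ[k] C ⊗[k] C} {ρ : M →ₗ[k] M ⊗[k] C} {φ : M →ₗ[k] C}
    (hh : h ∘ₗ X.g = TensorProduct.map t t ∘ₗ X.ΔE - ΔC ∘ₗ t)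
    (hρ : ρ ∘ₗ X.g = TensorProduct.map X.g t ∘ₗ X.ΔE)
    (hφ : φ ∘ₗ X.g = t ∘ₗ X.RE - RC ∘ₗ t) :
    HasComponents ΔC RC ΔM RM X.ΔE X.RE t X.g h ρ φ where
  tt := by rw [hh, add_sub_cancel]
  gt := hρ.symm
  tg := by
    rw [hρ, ← LinearMap.comp_assoc, ← TensorProduct.map_comp_comm_eq, LinearMap.comp_assoc,
      ← LinearMap.comp_neg, ← X.rblc.1]
  gg := X.homg.1
  tR := by rw [hφ, add_sub_cancel]
  gR := X.homg.2.symm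

/-- `t` is a retraction of the extension `X` and `c` is the non-abelian 2-cocycle it induces. -/
structure IsInduced (X : NAExt k C M lam ΔC RC ΔM RM) (t : X.E →ₗ[k] C)
    (c : Cocycle k C M lam ΔC RC ΔM RM) : Prop where
  retraction : t ∘ₗ X.f = LinearMap.id
  hasComponents : HasComponents ΔC RC ΔM RM X.ΔE X.RE t X.g c.1.1 c.1.2.1 c.1.2.2

lemma exists_hasComponents (X : NAExt k C M lam ΔC RC ΔM RM) {t : X.E →ₗ[k] C}
    (ht : t ∘ₗ X.f = LinearMap.id) :
    ∃ h ρ φ, HasComponents ΔC RC ΔM RM X.ΔE X.RE t X.g h ρ φ := by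
  have hgf : X.g ∘ₗ X.f = 0 := X.exact_f_g.linearMap_comp_eq_zero
  obtain ⟨h, hh⟩ := exists_comp_eq_of_comp_eq_zero X.exact_f_g X.surjg
    (F := TensorProduct.map t t ∘ₗ X.ΔE - ΔC ∘ₗ t) (by
      rw [LinearMap.sub_comp, LinearMap.comp_assoc, LinearMap.comp_assoc, ← X.homf.1,
        ← LinearMap.comp_assoc, ← TensorProduct.map_comp, ht, TensorProduct.map_id,
        LinearMap.id_comp, LinearMap.comp_id, sub_self])
  obtain ⟨ρ, hρ⟩ := exists_comp_eq_of_comp_eq_zero X.exact_f_g X.surjg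
    (F := TensorProduct.map X.g t ∘ₗ X.ΔE) (by
      rw [LinearMap.comp_assoc, ← X.homf.1, ← LinearMap.comp_assoc, ← TensorProduct.map_comp,
        hgf, TensorProduct.map_zero_left, LinearMap.zero_comp])
  obtain ⟨φ, hφ⟩ := exists_comp_eq_of_comp_eq_zero X.exact_f_g X.surjg
    (F := t ∘ₗ X.RE - RC ∘ₗ t) (by
      rw [LinearMap.sub_comp, LinearMap.comp_assoc, LinearMap.comp_assoc, X.homf.2,
        ← LinearMap.comp_assoc, ht, LinearMap.id_comp, LinearMap.comp_id, sub_self])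
  exact ⟨h, ρ, φ, X.hasComponents hh hρ hφ⟩

lemma exists_isInduced (hC : IsRBLC lam ΔC RC) (hM : IsRBLC lam ΔM RM)
    (X : NAExt k C M lam ΔC RC ΔM RM) : ∃ c t, X.IsInduced t c := by
  obtain ⟨t, ht⟩ := X.f.exists_leftInverse_of_injective (LinearMap.ker_eq_bot.2 X.injf)
  obtain ⟨h, ρ, φ, S⟩ := X.exists_hasComponents ht
  obtain ⟨i, hid⟩ := exists_comp_add_comp_eq_id X.exact_f_g X.surjg ht
  exact ⟨⟨(h, ρ, φ), (S.isRBLC_iff_na2Cocycle hC hM hid X.surjg).1 X.rblc⟩, t, ht, S⟩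

variable {X Y : NAExt k C M lam ΔC RC ΔM RM} {t : X.E →ₗ[k] C} {t' : Y.E →ₗ[k] C}
  {c c' : Cocycle k C M lam ΔC RC ΔM RM}

lemma IsInduced.isHom_iff_equivVia (hX : X.IsInduced t c) (hY : Y.IsInduced t' c')
    {θ : X.E →ₗ[k] Y.E} {s : M →ₗ[k] C} (htθ : t' ∘ₗ θ = t + s ∘ₗ X.g)
    (hgθ : Y.g ∘ₗ θ = X.g) :
    IsHom X.ΔE X.RE Y.ΔE Y.RE θ
      ↔ EquivVia ΔC RC ΔM RM s c.1.1 c.1.2.1 c.1.2.2 c'.1.1 c'.1.2.1 c'.1.2.2 := by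
  obtain ⟨i, hid⟩ := exists_comp_add_comp_eq_id Y.exact_f_g Y.surjg hY.retraction
  exact hX.hasComponents.isHom_iff_equivVia hY.hasComponents X.surjg X.rblc.1 Y.rblc.1 hid htθ hgθ

lemma exists_linearEquiv_of_retraction (ht : t ∘ₗ X.f = LinearMap.id)
    (ht' : t' ∘ₗ Y.f = LinearMap.id) :
    ∃ θ : X.E ≃ₗ[k] Y.E, t' ∘ₗ θ = t ∧ θ ∘ₗ X.f = Y.f ∧ Y.g ∘ₗ θ = X.g := by
  obtain ⟨e, het, heg, hef⟩ := exists_linearEquiv_prod_of_retraction X.exact_f_g X.surjg ht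
  obtain ⟨e', het', heg', hef'⟩ := exists_linearEquiv_prod_of_retraction Y.exact_f_g Y.surjg ht'
  refine ⟨e ≪≫ₗ e'.symm, ?_, ?_, ?_⟩
  · rw [← het, ← het']
    ext x
    simp
  · rw [← hef, ← hef']
    ext x
    simp
  · rw [← heg, ← heg']
    ext x
    simp

lemma IsInduced.naExtRel_iff_cocycleRel (hX : X.IsInduced t c) (hY : Y.IsInduced t' c') :
    NAExtRel X Y ↔ CocycleRel c c' := by
  constructor
  · rintro ⟨θ, hθ, -, hfθ, hgθ⟩
    obtain ⟨s, hs⟩ := exists_comp_eq_of_comp_eq_zero X.exact_f_g X.surjg (F := t' ∘ₗ θ - t) (by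
      rw [LinearMap.sub_comp, LinearMap.comp_assoc, hfθ, hX.retraction, hY.retraction, sub_self])
    exact ⟨s, (hX.isHom_iff_equivVia hY (by rw [hs, add_sub_cancel]) hgθ).1 hθ⟩
  · rintro ⟨s, hs⟩
    have hts : (t + s ∘ₗ X.g) ∘ₗ X.f = LinearMap.id := by
      rw [LinearMap.add_comp, LinearMap.comp_assoc, X.exact_f_g.linearMap_comp_eq_zero,
        LinearMap.comp_zero, add_zero, hX.retraction]
    obtain ⟨θ, htθ, hfθ, hgθ⟩ := exists_linearEquiv_of_retraction hts hY.retraction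
    exact ⟨θ, (hX.isHom_iff_equivVia hY htθ hgθ).2 hs, θ.bijective, hfθ, hgθ⟩

end NAExt

lemma NAExtRel.refl (X : NAExt k C M lam ΔC RC ΔM RM) : NAExtRel X X :=
  ⟨LinearMap.id, ⟨by simp, by simp⟩, Function.bijective_id, by simp, by simp⟩

/-- The extension on `C × M` with cobracket `prodCobra` and operator `prodRB` associated to a
non-abelian 2-cocycle. -/
noncomputable def prodExt (hC : IsRBLC lam ΔC RC) (hM : IsRBLC lam ΔM RM)
    (c : Cocycle k C M lam ΔC RC ΔM RM) : NAExt k C M lam ΔC RC ΔM RM where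
  E := C × M
  ΔE := prodCobra ΔC ΔM c.1.1 c.1.2.1
  RE := prodRB RC RM c.1.2.2
  rblc := ((hasComponents_prod ΔC RC ΔM RM _ _ _).isRBLC_iff_na2Cocycle hC hM
    (f := LinearMap.inl k C M) (i := LinearMap.inr k C M) (by ext <;> simp)
    LinearMap.snd_surjective).2 c.2
  f := LinearMap.inl k C M
  g := LinearMap.snd k C M
  homf := by
    constructor
    · ext c; simp [prodCobra]
    · ext c <;> simp [prodRB]
  homg := ⟨(hasComponents_prod ΔC RC ΔM RM _ _ c.1.2.2).gg,
    (hasComponents_prod ΔC RC ΔM RM c.1.1 c.1.2.1 _).gR.symm⟩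
  injf := LinearMap.inl_injective
  surjg := LinearMap.snd_surjective
  exact := LinearMap.range_inl k C M

lemma isInduced_prodExt (hC : IsRBLC lam ΔC RC) (hM : IsRBLC lam ΔM RM)
    (c : Cocycle k C M lam ΔC RC ΔM RM) :
    (prodExt hC hM c).IsInduced (LinearMap.fst k C M) c :=
  ⟨LinearMap.fst_comp_inl k C M, hasComponents_prod ΔC RC ΔM RM _ _ _⟩

end Extensions

theorem stmt9 (hC : IsRBLC lam ΔC RC) (hM : IsRBLC lam ΔM RM) :
    ∃ Φ : Quot (NAExtRel (k := k) (C := C) (M := M) (lam := lam)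
            (ΔC := ΔC) (RC := RC) (ΔM := ΔM) (RM := RM)) →
          Quot (CocycleRel (k := k) (C := C) (M := M) (lam := lam)
            (ΔC := ΔC) (RC := RC) (ΔM := ΔM) (RM := RM)),
      Function.Bijective Φ ∧
      -- `Φ` sends the class of an extension to the class of the non-abelian
      -- 2-cocycle induced by any retraction of it:
      (∀ (X : NAExt k C M lam ΔC RC ΔM RM) (t : X.E →ₗ[k] C),
        t ∘ₗ X.f = LinearMap.id →
        ∀ (h : M →ₗ[k] C ⊗[k] C) (ρ : M →ₗ[k] M ⊗[k] C) (φ : M →ₗ[k] C)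
          (hcoc : NA2Cocycle lam ΔC RC ΔM RM h ρ φ),
          h ∘ₗ X.g = TensorProduct.map t t ∘ₗ X.ΔE - ΔC ∘ₗ t →
          ρ ∘ₗ X.g = TensorProduct.map X.g t ∘ₗ X.ΔE →
          φ ∘ₗ X.g = t ∘ₗ X.RE - RC ∘ₗ t →
          Φ (Quot.mk _ X) = Quot.mk _ ⟨(h, ρ, φ), hcoc⟩) := by
  choose c t hct using NAExt.exists_isInduced hC hM
  let Φ := Quot.map c fun X Y hXY => ((hct X).naExtRel_iff_cocycleRel (hct Y)).1 hXY
  let Ψ := Quot.map (prodExt hC hM) fun x y hxy =>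
    ((isInduced_prodExt hC hM x).naExtRel_iff_cocycleRel (isInduced_prodExt hC hM y)).2 hxy
  have hΦ {X : NAExt k C M lam ΔC RC ΔM RM} {t' : X.E →ₗ[k] C}
      {x : Cocycle k C M lam ΔC RC ΔM RM} (hx : X.IsInduced t' x) : Φ (Quot.mk _ X) = Quot.mk _ x :=
    Quot.sound (((hct X).naExtRel_iff_cocycleRel hx).1 (NAExtRel.refl X))
  refine ⟨Φ, Function.bijective_iff_has_inverse.2 ⟨Ψ, ?_, ?_⟩, ?_⟩
  · rintro ⟨X⟩
    have hrefl := ((hct X).naExtRel_iff_cocycleRel (hct X)).1 (NAExtRel.refl X)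
    exact Quot.sound (((isInduced_prodExt hC hM (c X)).naExtRel_iff_cocycleRel (hct X)).2 hrefl)
  · rintro ⟨x⟩
    exact hΦ (isInduced_prodExt hC hM x)
  · intro X t' ht' h ρ φ hcoc hh hρ hφ
    exact hΦ ⟨ht', X.hasComponents hh hρ hφ⟩

end
end

section
/- Let 0 → C →f E →g M → 0 be a non-abelian extension of λ-weighted Rota-Baxter Lie coalgebras with retraction t, and let (h, ρ, φ) = (h_t, ρ_t, φ_t) be the induced non-abelian 2-cocycle. Then the map θ : E → C⊕M defined by θ(e) = t(e) + g(e) is an isomorphism of λ-weighted Rota-Baxter Lie coalgebras from (E, Δ_E, R_E) onto (C⊕M, Δ_{(h,ρ)}, R_φ) satisfying θf = i_C and π_M θ = g, where i_C is the canonical injection and π_M the canonical projection; hence the extension is equivalent to the extension 0 → C →i_C C⊕M →π_M M → 0. -/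
open TensorProduct LinearMap

section

variable {k : Type*} [Field k]
variable {C : Type*} [AddCommGroup C] [Module k C]
variable {M : Type*} [AddCommGroup M] [Module k M]
variable {E : Type*} [AddCommGroup E] [Module k E]

/-! Write `θ = inl ∘ t + inr ∘ g` and expand `(θ ⊗ θ)Δ_E` into four blocks. The definitions of
`h_t` and `ρ_t`, together with `g` being a homomorphism, identify the `C ⊗ C`, `M ⊗ C` and `M ⊗ M`
blocks with those of `Δ_{(h,ρ)}θ`. The remaining `C ⊗ M` block of `Δ_{(h,ρ)}θ` is `-τρg`, and
co-antisymmetry of `Δ_E` gives `τ(g ⊗ t)Δ_E = -(t ⊗ g)Δ_E`. The definition of `φ_t` says that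
`R_φ θ` and `θ R_E` have the same `C`-component. Bijectivity of `θ` is the splitting lemma. -/

theorem prod_eq_inl_comp_add_inr_comp {R P Q N : Type*} [Semiring R]
    [AddCommMonoid P] [AddCommMonoid Q] [AddCommMonoid N] [Module R P] [Module R Q] [Module R N]
    (u : P →ₗ[R] Q) (v : P →ₗ[R] N) :
    u.prod v = inl R Q N ∘ₗ u + inr R Q N ∘ₗ v := by
  rw [← coprod_comp_prod, coprod_inl_inr, id_comp]

theorem tensorMap_prod_prod {R P Q N P' Q' N' : Type*} [CommSemiring R]
    [AddCommMonoid P] [AddCommMonoid Q] [AddCommMonoid N]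
    [AddCommMonoid P'] [AddCommMonoid Q'] [AddCommMonoid N']
    [Module R P] [Module R Q] [Module R N] [Module R P'] [Module R Q'] [Module R N']
    (u : P →ₗ[R] Q) (v : P →ₗ[R] N) (u' : P' →ₗ[R] Q') (v' : P' →ₗ[R] N') :
    TensorProduct.map (u.prod v) (u'.prod v')
      = TensorProduct.map (inl R Q N) (inl R Q' N') ∘ₗ TensorProduct.map u u'
        + TensorProduct.map (inl R Q N) (inr R Q' N') ∘ₗ TensorProduct.map u v'
        + TensorProduct.map (inr R Q N) (inl R Q' N') ∘ₗ TensorProduct.map v u'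
        + TensorProduct.map (inr R Q N) (inr R Q' N') ∘ₗ TensorProduct.map v v' := by
  simp only [prod_eq_inl_comp_add_inr_comp, TensorProduct.map_add_left,
    TensorProduct.map_add_right, TensorProduct.map_comp]
  abel

theorem CoAnti.comm_comp_map_comp {Δ : E →ₗ[k] E ⊗[k] E} (hΔ : CoAnti Δ)
    (u : E →ₗ[k] M) (v : E →ₗ[k] C) :
    (TensorProduct.comm k M C).toLinearMap ∘ₗ TensorProduct.map u v ∘ₗ Δ
      = -(TensorProduct.map v u ∘ₗ Δ) := by
  have hswap : (TensorProduct.comm k E E).toLinearMap ∘ₗ Δ = -Δ :=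
    (neg_eq_iff_eq_neg.mpr hΔ).symm
  rw [← comp_assoc, ← TensorProduct.map_comp_comm_eq, comp_assoc, hswap, comp_neg]

theorem prodCobra_comp_prod (ΔC : C →ₗ[k] C ⊗[k] C) (ΔM : M →ₗ[k] M ⊗[k] M)
    (h : M →ₗ[k] C ⊗[k] C) (ρ : M →ₗ[k] M ⊗[k] C) (t : E →ₗ[k] C) (g : E →ₗ[k] M) :
    prodCobra ΔC ΔM h ρ ∘ₗ t.prod g
      = TensorProduct.map (inl k C M) (inl k C M) ∘ₗ (ΔC ∘ₗ t + h ∘ₗ g)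
        + TensorProduct.map (inr k C M) (inr k C M) ∘ₗ ΔM ∘ₗ g
        + TensorProduct.map (inr k C M) (inl k C M) ∘ₗ ρ ∘ₗ g
        - TensorProduct.map (inl k C M) (inr k C M) ∘ₗ
            (TensorProduct.comm k M C).toLinearMap ∘ₗ ρ ∘ₗ g :=
  rfl

theorem prodRB_comp_prod (RC : C →ₗ[k] C) (RM : M →ₗ[k] M) (φ : M →ₗ[k] C)
    (t : E →ₗ[k] C) (g : E →ₗ[k] M) :
    prodRB RC RM φ ∘ₗ t.prod g = (RC ∘ₗ t + φ ∘ₗ g).prod (RM ∘ₗ g) := by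
  rw [prod_eq_inl_comp_add_inr_comp (RC ∘ₗ t + φ ∘ₗ g)]
  rfl

section Hom

variable {ΔC : C →ₗ[k] C ⊗[k] C} {RC : C →ₗ[k] C} {ΔM : M →ₗ[k] M ⊗[k] M} {RM : M →ₗ[k] M}
  {ΔE : E →ₗ[k] E ⊗[k] E} {RE : E →ₗ[k] E} {g : E →ₗ[k] M} {t : E →ₗ[k] C}
  {h : M →ₗ[k] C ⊗[k] C} {ρ : M →ₗ[k] M ⊗[k] C} {φ : M →ₗ[k] C}

theorem map_prod_comp_eq_prodCobra_comp_prod (hΔE : CoAnti ΔE)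
    (hg : TensorProduct.map g g ∘ₗ ΔE = ΔM ∘ₗ g)
    (hh : h ∘ₗ g = TensorProduct.map t t ∘ₗ ΔE - ΔC ∘ₗ t)
    (hρ : ρ ∘ₗ g = TensorProduct.map g t ∘ₗ ΔE) :
    TensorProduct.map (t.prod g) (t.prod g) ∘ₗ ΔE = prodCobra ΔC ΔM h ρ ∘ₗ t.prod g := by
  have hCC : ΔC ∘ₗ t + h ∘ₗ g = TensorProduct.map t t ∘ₗ ΔE := by rw [hh, add_sub_cancel]
  have hCM : (TensorProduct.comm k M C).toLinearMap ∘ₗ ρ ∘ₗ g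
      = -(TensorProduct.map t g ∘ₗ ΔE) := by
    rw [hρ, hΔE.comm_comp_map_comp]
  rw [prodCobra_comp_prod, hCC, hCM, hρ, ← hg, tensorMap_prod_prod]
  simp only [add_comp, comp_neg, comp_assoc]
  abel

theorem prodRB_comp_prod_eq_prod_comp (hg : RM ∘ₗ g = g ∘ₗ RE)
    (hφ : φ ∘ₗ g = t ∘ₗ RE - RC ∘ₗ t) :
    prodRB RC RM φ ∘ₗ t.prod g = t.prod g ∘ₗ RE := by
  rw [prodRB_comp_prod, hφ, add_sub_cancel, hg, prod_comp]

end Hom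

theorem stmt10_general (ΔC : C →ₗ[k] C ⊗[k] C) (RC : C →ₗ[k] C)
    (ΔM : M →ₗ[k] M ⊗[k] M) (RM : M →ₗ[k] M)
    (ΔE : E →ₗ[k] E ⊗[k] E) (RE : E →ₗ[k] E) (hE : CoAnti ΔE)
    (f : C →ₗ[k] E) (g : E →ₗ[k] M) (homg : IsHom ΔE RE ΔM RM g)
    (surjg : Function.Surjective g) (hexact : LinearMap.range f = LinearMap.ker g)
    (t : E →ₗ[k] C) (ht : t ∘ₗ f = LinearMap.id)
    (h : M →ₗ[k] C ⊗[k] C) (ρ : M →ₗ[k] M ⊗[k] C) (φ : M →ₗ[k] C)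
    (hh : h ∘ₗ g = TensorProduct.map t t ∘ₗ ΔE - ΔC ∘ₗ t)
    (hρ : ρ ∘ₗ g = TensorProduct.map g t ∘ₗ ΔE)
    (hφ : φ ∘ₗ g = t ∘ₗ RE - RC ∘ₗ t) :
    IsHom ΔE RE (prodCobra ΔC ΔM h ρ) (prodRB RC RM φ) (LinearMap.prod t g) ∧
    Function.Bijective (LinearMap.prod t g) ∧
    (LinearMap.prod t g) ∘ₗ f = LinearMap.inl k C M ∧
    LinearMap.snd k C M ∘ₗ (LinearMap.prod t g) = g := by
  have exact_fg : Function.Exact f g := LinearMap.exact_iff.mpr hexact.symm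
  have bijective_θ : Function.Bijective (t.prod g) :=
    (exact_fg.splitInjectiveEquiv surjg ⟨t, ht⟩).1.bijective
  have θ_comp_f : t.prod g ∘ₗ f = inl k C M := by
    rw [prod_comp, ht, exact_fg.linearMap_comp_eq_zero, inl]
  exact ⟨⟨map_prod_comp_eq_prodCobra_comp_prod hE homg.1 hh hρ,
    prodRB_comp_prod_eq_prod_comp homg.2 hφ⟩, bijective_θ, θ_comp_f, snd_prod t g⟩

theorem stmt10 (lam : k) (ΔC : C →ₗ[k] C ⊗[k] C) (RC : C →ₗ[k] C)
    (ΔM : M →ₗ[k] M ⊗[k] M) (RM : M →ₗ[k] M)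
    (ΔE : E →ₗ[k] E ⊗[k] E) (RE : E →ₗ[k] E)
    (hC : IsRBLC lam ΔC RC) (hM : IsRBLC lam ΔM RM) (hE : IsRBLC lam ΔE RE)
    (f : C →ₗ[k] E) (g : E →ₗ[k] M)
    (homf : IsHom ΔC RC ΔE RE f) (homg : IsHom ΔE RE ΔM RM g)
    (injf : Function.Injective f) (surjg : Function.Surjective g)
    (hexact : LinearMap.range f = LinearMap.ker g)
    (t : E →ₗ[k] C) (ht : t ∘ₗ f = LinearMap.id)
    (h : M →ₗ[k] C ⊗[k] C) (ρ : M →ₗ[k] M ⊗[k] C) (φ : M →ₗ[k] C)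
    (hh : h ∘ₗ g = TensorProduct.map t t ∘ₗ ΔE - ΔC ∘ₗ t)
    (hρ : ρ ∘ₗ g = TensorProduct.map g t ∘ₗ ΔE)
    (hφ : φ ∘ₗ g = t ∘ₗ RE - RC ∘ₗ t) :
    -- `θ = (t, g) : E → C ⊕ M` is an isomorphism of `λ`-weighted Rota-Baxter Lie
    -- coalgebras onto `(C ⊕ M, Δ_{(h,ρ)}, R_φ)` ...
    IsHom ΔE RE (prodCobra ΔC ΔM h ρ) (prodRB RC RM φ) (LinearMap.prod t g) ∧
    Function.Bijective (LinearMap.prod t g) ∧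
    -- ... intertwining the two extensions: `θ ∘ f = i_C` and `π_M ∘ θ = g`.
    (LinearMap.prod t g) ∘ₗ f = LinearMap.inl k C M ∧
    LinearMap.snd k C M ∘ₗ (LinearMap.prod t g) = g := by
  exact stmt10_general ΔC RC ΔM RM ΔE RE hE.1 f g homg surjg hexact t ht h ρ φ hh hρ hφ

end
end

section
/- Let E₁ and E₂ be two equivalent non-abelian extensions of the λ-weighted Rota-Baxter Lie coalgebra (C, Δ_C, R_C) by (M, Δ_M, R_M), and let (α, β) ∈ Aut(C)×Aut(M) be a pair of λ-weighted Rota-Baxter Lie coalgebra automorphisms. Then (α, β) is extensible with respect to E₁ if and only if (α, β) is extensible with respect to E₂. -/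
open TensorProduct LinearMap

section

variable {k : Type*} [Field k]
variable {C : Type*} [AddCommGroup C] [Module k C]
variable {M : Type*} [AddCommGroup M] [Module k M]
variable {E : Type*} [AddCommGroup E] [Module k E]

theorem symm_comp_eq_comp_symm {R A A' B B' : Type*} [Semiring R]
    [AddCommMonoid A] [Module R A] [AddCommMonoid A'] [Module R A']
    [AddCommMonoid B] [Module R B] [AddCommMonoid B'] [Module R B']
    {a : A ≃ₗ[R] A'} {b : B ≃ₗ[R] B'} {f : A →ₗ[R] B} {f' : A' →ₗ[R] B'}
    (h : b.toLinearMap ∘ₗ f = f' ∘ₗ a.toLinearMap) :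
    b.symm.toLinearMap ∘ₗ f' = f ∘ₗ a.symm.toLinearMap := by
  rw [LinearEquiv.eq_comp_toLinearMap_symm, comp_assoc, LinearEquiv.toLinearMap_symm_comp_eq, h]

section Homomorphisms

variable {E₁ : Type*} [AddCommGroup E₁] [Module k E₁]
variable {E₂ : Type*} [AddCommGroup E₂] [Module k E₂]
variable {E₃ : Type*} [AddCommGroup E₃] [Module k E₃]
variable {Δ₁ : E₁ →ₗ[k] E₁ ⊗[k] E₁} {R₁ : E₁ →ₗ[k] E₁}
variable {Δ₂ : E₂ →ₗ[k] E₂ ⊗[k] E₂} {R₂ : E₂ →ₗ[k] E₂}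
variable {Δ₃ : E₃ →ₗ[k] E₃ ⊗[k] E₃} {R₃ : E₃ →ₗ[k] E₃}

theorem IsHom.comp {q : E₂ →ₗ[k] E₃} {p : E₁ →ₗ[k] E₂}
    (hq : IsHom Δ₂ R₂ Δ₃ R₃ q) (hp : IsHom Δ₁ R₁ Δ₂ R₂ p) :
    IsHom Δ₁ R₁ Δ₃ R₃ (q ∘ₗ p) := by
  constructor
  · calc TensorProduct.map (q ∘ₗ p) (q ∘ₗ p) ∘ₗ Δ₁
        = TensorProduct.map q q ∘ₗ TensorProduct.map p p ∘ₗ Δ₁ := by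
          rw [TensorProduct.map_comp, comp_assoc]
      _ = (TensorProduct.map q q ∘ₗ Δ₂) ∘ₗ p := by rw [hp.1, comp_assoc]
      _ = Δ₃ ∘ₗ q ∘ₗ p := by rw [hq.1, comp_assoc]
  · calc R₃ ∘ₗ q ∘ₗ p = q ∘ₗ R₂ ∘ₗ p := by rw [← comp_assoc, hq.2, comp_assoc]
      _ = (q ∘ₗ p) ∘ₗ R₁ := by rw [hp.2, comp_assoc]

theorem IsHom.symm {e : E₁ ≃ₗ[k] E₂} (he : IsHom Δ₁ R₁ Δ₂ R₂ e.toLinearMap) :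
    IsHom Δ₂ R₂ Δ₁ R₁ e.symm.toLinearMap :=
  ⟨symm_comp_eq_comp_symm (b := TensorProduct.congr e e) he.1,
    (symm_comp_eq_comp_symm he.2.symm).symm⟩

end Homomorphisms

section ExtensionEquivalence

variable {E₁ : Type*} [AddCommGroup E₁] [Module k E₁]
variable {E₂ : Type*} [AddCommGroup E₂] [Module k E₂]

/-- `e` is an equivalence from the sequence `C →f₁ E₁ →g₁ M` to `C →f₂ E₂ →g₂ M`: an isomorphism
compatible with cobrackets and Rota-Baxter operators that induces the identity on `C` and `M`.
It serves to transport lifts of a pair `(α, β)` from `E₁` to `E₂` by conjugation. Bijectivity is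
encoded by taking `e` to be a linear equivalence. -/
structure IsExtensionEquiv (Δ₁ : E₁ →ₗ[k] E₁ ⊗[k] E₁) (R₁ : E₁ →ₗ[k] E₁)
    (f₁ : C →ₗ[k] E₁) (g₁ : E₁ →ₗ[k] M)
    (Δ₂ : E₂ →ₗ[k] E₂ ⊗[k] E₂) (R₂ : E₂ →ₗ[k] E₂)
    (f₂ : C →ₗ[k] E₂) (g₂ : E₂ →ₗ[k] M) (e : E₁ ≃ₗ[k] E₂) : Prop where
  isHom : IsHom Δ₁ R₁ Δ₂ R₂ e.toLinearMap
  comp_left : e.toLinearMap ∘ₗ f₁ = f₂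
  right_comp : g₂ ∘ₗ e.toLinearMap = g₁

variable {Δ₁ : E₁ →ₗ[k] E₁ ⊗[k] E₁} {R₁ : E₁ →ₗ[k] E₁}
variable {Δ₂ : E₂ →ₗ[k] E₂ ⊗[k] E₂} {R₂ : E₂ →ₗ[k] E₂}
variable {f₁ : C →ₗ[k] E₁} {g₁ : E₁ →ₗ[k] M} {f₂ : C →ₗ[k] E₂} {g₂ : E₂ →ₗ[k] M}
variable {e : E₁ ≃ₗ[k] E₂}

namespace IsExtensionEquiv

theorem symm (he : IsExtensionEquiv Δ₁ R₁ f₁ g₁ Δ₂ R₂ f₂ g₂ e) :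
    IsExtensionEquiv Δ₂ R₂ f₂ g₂ Δ₁ R₁ f₁ g₁ e.symm where
  isHom := he.isHom.symm
  comp_left := (LinearEquiv.toLinearMap_symm_comp_eq _ _).2 he.comp_left.symm
  right_comp := (LinearEquiv.comp_toLinearMap_symm_eq _ _).2 he.right_comp.symm

theorem extensible (he : IsExtensionEquiv Δ₁ R₁ f₁ g₁ Δ₂ R₂ f₂ g₂ e)
    {α : C →ₗ[k] C} {β : M →ₗ[k] M} (h : Extensible Δ₁ R₁ f₁ g₁ α β) :
    Extensible Δ₂ R₂ f₂ g₂ α β := by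
  obtain ⟨γ, homγ, bijγ, map_range, γ_comp_f, g_comp_γ⟩ := h
  let γ' : E₂ →ₗ[k] E₂ := e.toLinearMap ∘ₗ γ ∘ₗ e.symm.toLinearMap
  have γ'_comp_e : γ' ∘ₗ e.toLinearMap = e.toLinearMap ∘ₗ γ := by
    ext x
    simp [γ']
  have range_f₂ : range f₂ = (range f₁).map e.toLinearMap := by
    rw [← he.comp_left, range_comp]
  refine ⟨γ', he.isHom.comp (homγ.comp he.isHom.symm),
    e.bijective.comp (bijγ.comp e.symm.bijective), ?_, ?_, ?_⟩
  · calc (range f₂).map γ' = ((range f₁).map γ).map e.toLinearMap := by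
          rw [range_f₂, ← Submodule.map_comp, γ'_comp_e, Submodule.map_comp]
      _ = range f₂ := by rw [map_range, range_f₂]
  · calc γ' ∘ₗ f₂ = e.toLinearMap ∘ₗ γ ∘ₗ f₁ := by
          rw [← he.comp_left, ← comp_assoc, γ'_comp_e, comp_assoc]
      _ = f₂ ∘ₗ α := by rw [γ_comp_f, ← comp_assoc, he.comp_left]
  · calc g₂ ∘ₗ γ' = (g₁ ∘ₗ γ) ∘ₗ e.symm.toLinearMap := by
          simp only [γ', ← he.right_comp, comp_assoc]
      _ = β ∘ₗ g₂ := by rw [g_comp_γ, comp_assoc, he.symm.right_comp]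

end IsExtensionEquiv

theorem stmt11_general (he : IsExtensionEquiv Δ₁ R₁ f₁ g₁ Δ₂ R₂ f₂ g₂ e)
    (α : C →ₗ[k] C) (β : M →ₗ[k] M) :
    Extensible Δ₁ R₁ f₁ g₁ α β ↔ Extensible Δ₂ R₂ f₂ g₂ α β :=
  ⟨he.extensible, he.symm.extensible⟩

end ExtensionEquivalence

theorem stmt11 {E₁ : Type*} [AddCommGroup E₁] [Module k E₁]
    {E₂ : Type*} [AddCommGroup E₂] [Module k E₂]
    (lam : k) (ΔC : C →ₗ[k] C ⊗[k] C) (RC : C →ₗ[k] C)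
    (ΔM : M →ₗ[k] M ⊗[k] M) (RM : M →ₗ[k] M)
    (ΔE₁ : E₁ →ₗ[k] E₁ ⊗[k] E₁) (RE₁ : E₁ →ₗ[k] E₁)
    (ΔE₂ : E₂ →ₗ[k] E₂ ⊗[k] E₂) (RE₂ : E₂ →ₗ[k] E₂)
    (hC : IsRBLC lam ΔC RC) (hM : IsRBLC lam ΔM RM)
    (hE₁ : IsRBLC lam ΔE₁ RE₁) (hE₂ : IsRBLC lam ΔE₂ RE₂)
    (f₁ : C →ₗ[k] E₁) (g₁ : E₁ →ₗ[k] M) (f₂ : C →ₗ[k] E₂) (g₂ : E₂ →ₗ[k] M)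
    (homf₁ : IsHom ΔC RC ΔE₁ RE₁ f₁) (homg₁ : IsHom ΔE₁ RE₁ ΔM RM g₁)
    (injf₁ : Function.Injective f₁) (surjg₁ : Function.Surjective g₁)
    (hexact₁ : LinearMap.range f₁ = LinearMap.ker g₁)
    (homf₂ : IsHom ΔC RC ΔE₂ RE₂ f₂) (homg₂ : IsHom ΔE₂ RE₂ ΔM RM g₂)
    (injf₂ : Function.Injective f₂) (surjg₂ : Function.Surjective g₂)
    (hexact₂ : LinearMap.range f₂ = LinearMap.ker g₂)
    -- the two extensions are equivalent:
    (hequiv : ∃ θ : E₁ →ₗ[k] E₂, IsHom ΔE₁ RE₁ ΔE₂ RE₂ θ ∧ Function.Bijective θ ∧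
        θ ∘ₗ f₁ = f₂ ∧ g₂ ∘ₗ θ = g₁)
    -- `(α, β)` is a pair of automorphisms:
    (α : C →ₗ[k] C) (β : M →ₗ[k] M)
    (homα : IsHom ΔC RC ΔC RC α) (bijα : Function.Bijective α)
    (homβ : IsHom ΔM RM ΔM RM β) (bijβ : Function.Bijective β) :
    Extensible ΔE₁ RE₁ f₁ g₁ α β ↔ Extensible ΔE₂ RE₂ f₂ g₂ α β := by
  obtain ⟨θ, homθ, bijθ, hf, hg⟩ := hequiv
  exact stmt11_general (e := LinearEquiv.ofBijective θ bijθ) ⟨homθ, hf, hg⟩ α β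

end
end

section
/- Let 0 → C →f E →g M → 0 be a non-abelian extension of λ-weighted Rota-Baxter Lie coalgebras with retraction t, and let (h, ρ, φ) be the induced non-abelian 2-cocycle. A pair (α, β) ∈ Aut(C)×Aut(M) is extensible with respect to this extension if and only if there exists a linear map s : M → C satisfying: hβ − (α⊗α)h = (s⊗α)ρ − τ(s⊗α)ρ − Δ_C s + (s⊗s)Δ_M; ρβ − (β⊗α)ρ = (β⊗s)Δ_M; and φβ − αφ = sR_M − R_C s. -/
open TensorProduct LinearMap

section

variable {k : Type*} [Field k]
variable {C : Type*} [AddCommGroup C] [Module k C]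
variable {M : Type*} [AddCommGroup M] [Module k M]
variable {E : Type*} [AddCommGroup E] [Module k E]

/-! The pair `(t, g)` identifies `E` with `C × M`, and a linear map `γ` lies over `(α, β)` exactly
when it reads `(c, m) ↦ (α c + s m, β m)` for some `s : M → C`. The failure of `γ` to be a
homomorphism, `Δ_E γ - (γ ⊗ γ) Δ_E` and `R_E γ - γ R_E`, is then computed component by component:
every component is of the form `u ∘ g`, where `u` is the difference of the two sides of one of the
cocycle equations for `s`, or zero. The component in `C ⊗ M` is redundant by co-antisymmetry. Since
`g` is surjective, `γ` is a homomorphism if and only if the equations hold. -/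

section Splitting

variable {R : Type*} [Ring R] {C M E P : Type*} [AddCommGroup C] [Module R C]
  [AddCommGroup M] [Module R M] [AddCommGroup E] [Module R E] [AddCommGroup P] [Module R P]
  {f : C →ₗ[R] E} {g : E →ₗ[R] M} {t : E →ₗ[R] C} {σ : M →ₗ[R] E}

theorem comp_eq_zero_iff_of_surjective (hg : Function.Surjective g) {v : M →ₗ[R] P} :
    v ∘ₗ g = 0 ↔ v = 0 := by
  rw [← cancel_right hg, zero_comp]

theorem exists_comp_eq_of_exact (hfg : Function.Exact f g) (hg : Function.Surjective g)
    {u : E →ₗ[R] P} (hu : u ∘ₗ f = 0) : ∃ v : M →ₗ[R] P, v ∘ₗ g = u := by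
  have hker : ker g ≤ ker u := by
    rw [hfg.linearMap_ker_eq]
    exact range_le_ker_iff.2 hu
  refine ⟨(ker g).liftQ u hker ∘ₗ (g.quotKerEquivOfSurjective hg).symm.toLinearMap, ?_⟩
  ext x
  have hx : (g.quotKerEquivOfSurjective hg).symm (g x) = (ker g).mkQ x :=
    (LinearEquiv.symm_apply_eq _).2 rfl
  simp [hx]

theorem exists_section_of_retraction (hfg : Function.Exact f g) (hg : Function.Surjective g)
    (ht : t ∘ₗ f = LinearMap.id) :
    ∃ σ : M →ₗ[R] E, t ∘ₗ σ = 0 ∧ g ∘ₗ σ = LinearMap.id ∧ f ∘ₗ t + σ ∘ₗ g = LinearMap.id := by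
  obtain ⟨σ, hσ⟩ : ∃ σ : M →ₗ[R] E, σ ∘ₗ g = LinearMap.id - f ∘ₗ t :=
    exists_comp_eq_of_exact hfg hg (by rw [sub_comp, comp_assoc, ht]; simp)
  refine ⟨σ, (cancel_right hg).1 ?_, (cancel_right hg).1 ?_, by rw [hσ]; abel⟩
  · rw [comp_assoc, hσ, comp_sub, ← comp_assoc, ht]; simp
  · rw [comp_assoc, hσ, comp_sub, ← comp_assoc, hfg.linearMap_comp_eq_zero]; simp

theorem eq_of_comp_eq_of_splitting (hid : f ∘ₗ t + σ ∘ₗ g = LinearMap.id) {u v : P →ₗ[R] E}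
    (ht : t ∘ₗ u = t ∘ₗ v) (hg : g ∘ₗ u = g ∘ₗ v) : u = v :=
  calc u = f ∘ₗ (t ∘ₗ u) + σ ∘ₗ (g ∘ₗ u) := by
        rw [← comp_assoc, ← comp_assoc, ← add_comp, hid, id_comp]
    _ = f ∘ₗ (t ∘ₗ v) + σ ∘ₗ (g ∘ₗ v) := by rw [ht, hg]
    _ = v := by rw [← comp_assoc, ← comp_assoc, ← add_comp, hid, id_comp]

theorem exists_comp_eq_and_comp_eq_of_retraction (hfg : Function.Exact f g)
    (hg : Function.Surjective g) (ht : t ∘ₗ f = LinearMap.id) (u : P →ₗ[R] C) (v : P →ₗ[R] M) :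
    ∃ w : P →ₗ[R] E, t ∘ₗ w = u ∧ g ∘ₗ w = v := by
  obtain ⟨σ, tσ, gσ, -⟩ := exists_section_of_retraction hfg hg ht
  refine ⟨f ∘ₗ u + σ ∘ₗ v, ?_, ?_⟩
  · rw [comp_add, ← comp_assoc, ← comp_assoc, ht, tσ]; simp
  · rw [comp_add, ← comp_assoc, ← comp_assoc, hfg.linearMap_comp_eq_zero, gσ]; simp

end Splitting

section ShortFive

variable {R : Type*} [CommRing R] {C C' M M' E E' : Type*}
  [AddCommGroup C] [Module R C] [AddCommGroup C'] [Module R C']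
  [AddCommGroup M] [Module R M] [AddCommGroup M'] [Module R M']
  [AddCommGroup E] [Module R E] [AddCommGroup E'] [Module R E']
  {f : C →ₗ[R] E} {g : E →ₗ[R] M} {f' : C' →ₗ[R] E'} {g' : E' →ₗ[R] M'}
  {α : C →ₗ[R] C'} {β : M →ₗ[R] M'} {γ : E →ₗ[R] E'}

theorem bijective_of_shortExact (hf : Function.Injective f) (hfg : Function.Exact f g)
    (hg : Function.Surjective g) (hf' : Function.Injective f') (hfg' : Function.Exact f' g')
    (hg' : Function.Surjective g') (γf : γ ∘ₗ f = f' ∘ₗ α) (gγ : g' ∘ₗ γ = β ∘ₗ g)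
    (hα : Function.Bijective α) (hβ : Function.Bijective β) : Function.Bijective γ :=
  bijective_of_surjective_of_bijective_of_bijective_of_injective
    (0 : PUnit →ₗ[R] C) f g (0 : M →ₗ[R] PUnit) (0 : PUnit →ₗ[R] C') f' g' (0 : M' →ₗ[R] PUnit)
    id α γ β id (by simp) γf.symm gγ (by simp)
    ((exact_zero_iff_injective _ f).2 hf) hfg ((exact_zero_iff_surjective _ g).2 hg)
    ((exact_zero_iff_injective _ f').2 hf') hfg' ((exact_zero_iff_surjective _ g').2 hg')
    Function.surjective_id hα hβ Function.injective_id

end ShortFive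

section TensorSquare

variable {R : Type*} [CommRing R] {C M E : Type*} [AddCommGroup C] [Module R C]
  [AddCommGroup M] [Module R M] [AddCommGroup E] [Module R E]
  {f : C →ₗ[R] E} {g : E →ₗ[R] M} {t : E →ₗ[R] C} {σ : M →ₗ[R] E}

theorem eq_zero_of_map_eq_zero_of_splitting (hid : f ∘ₗ t + σ ∘ₗ g = LinearMap.id)
    {z : E ⊗[R] E} (htt : TensorProduct.map t t z = 0) (htg : TensorProduct.map t g z = 0)
    (hgt : TensorProduct.map g t z = 0) (hgg : TensorProduct.map g g z = 0) : z = 0 :=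
  calc z = TensorProduct.map (f ∘ₗ t + σ ∘ₗ g) (f ∘ₗ t + σ ∘ₗ g) z := by simp [hid]
    _ = 0 := by
      simp only [TensorProduct.map_add_left, TensorProduct.map_add_right, TensorProduct.map_comp,
        LinearMap.add_apply, comp_apply, htt, htg, hgt, hgg, map_zero, add_zero]

theorem eq_zero_of_map_eq_zero_of_comm_eq_neg (hid : f ∘ₗ t + σ ∘ₗ g = LinearMap.id)
    {z : E ⊗[R] E} (hz : TensorProduct.comm R E E z = -z) (htt : TensorProduct.map t t z = 0)
    (hgt : TensorProduct.map g t z = 0) (hgg : TensorProduct.map g g z = 0) : z = 0 := by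
  refine eq_zero_of_map_eq_zero_of_splitting hid htt ?_ hgt hgg
  rw [← neg_eq_zero, ← map_neg, ← hz, TensorProduct.map_comm, hgt, map_zero]

end TensorSquare

section Defect

variable {R : Type*} [CommRing R] {C C' M M' E E' : Type*}
  [AddCommGroup C] [Module R C] [AddCommGroup C'] [Module R C']
  [AddCommGroup M] [Module R M] [AddCommGroup M'] [Module R M']
  [AddCommGroup E] [Module R E] [AddCommGroup E'] [Module R E']

/-- The failure `Δ'γ - (γ⊗γ)Δ` of a linear map `γ` to be a homomorphism from the cobracket `Δ` to
the cobracket `Δ'`. -/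
def cobracketDefect (Δ : E →ₗ[R] E ⊗[R] E) (Δ' : E' →ₗ[R] E' ⊗[R] E') (γ : E →ₗ[R] E') :
    E →ₗ[R] E' ⊗[R] E' :=
  Δ' ∘ₗ γ - TensorProduct.map γ γ ∘ₗ Δ

variable {ΔC : C →ₗ[R] C ⊗[R] C} {ΔM : M →ₗ[R] M ⊗[R] M} {ΔE : E →ₗ[R] E ⊗[R] E}
  {ΔC' : C' →ₗ[R] C' ⊗[R] C'} {ΔM' : M' →ₗ[R] M' ⊗[R] M'} {ΔE' : E' →ₗ[R] E' ⊗[R] E'}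
  {RC : C →ₗ[R] C} {RM : M →ₗ[R] M} {RE : E →ₗ[R] E}
  {RC' : C' →ₗ[R] C'} {RM' : M' →ₗ[R] M'} {RE' : E' →ₗ[R] E'}
  {f' : C' →ₗ[R] E'} {σ' : M' →ₗ[R] E'}
  {g : E →ₗ[R] M} {t : E →ₗ[R] C} {g' : E' →ₗ[R] M'} {t' : E' →ₗ[R] C'}
  {h : M →ₗ[R] C ⊗[R] C} {ρ : M →ₗ[R] M ⊗[R] C} {φ : M →ₗ[R] C}
  {h' : M' →ₗ[R] C' ⊗[R] C'} {ρ' : M' →ₗ[R] M' ⊗[R] C'} {φ' : M' →ₗ[R] C'}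
  {α : C →ₗ[R] C'} {β : M →ₗ[R] M'} {γ : E →ₗ[R] E'} {s : M →ₗ[R] C'}

theorem cobracketDefect_eq_zero_iff :
    cobracketDefect ΔE ΔE' γ = 0 ↔ TensorProduct.map γ γ ∘ₗ ΔE = ΔE' ∘ₗ γ := by
  rw [cobracketDefect, sub_eq_zero, eq_comm]

theorem comm_cobracketDefect_apply
    (anti : ΔE = -((TensorProduct.comm R E E).toLinearMap ∘ₗ ΔE))
    (anti' : ΔE' = -((TensorProduct.comm R E' E').toLinearMap ∘ₗ ΔE')) (x : E) :
    TensorProduct.comm R E' E' (cobracketDefect ΔE ΔE' γ x) = -cobracketDefect ΔE ΔE' γ x := by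
  have hx : TensorProduct.comm R E E (ΔE x) = -ΔE x := neg_eq_iff_eq_neg.1 (congr($anti x)).symm
  have hγx : TensorProduct.comm R E' E' (ΔE' (γ x)) = -ΔE' (γ x) :=
    neg_eq_iff_eq_neg.1 (congr($anti' (γ x))).symm
  simp only [cobracketDefect, LinearMap.sub_apply, comp_apply, map_sub, ← TensorProduct.map_comm,
    hx, hγx, map_neg, neg_sub_neg, neg_sub]

theorem cobracketDefect_eq_zero_iff_components
    (anti : ΔE = -((TensorProduct.comm R E E).toLinearMap ∘ₗ ΔE))
    (anti' : ΔE' = -((TensorProduct.comm R E' E').toLinearMap ∘ₗ ΔE'))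
    (hid' : f' ∘ₗ t' + σ' ∘ₗ g' = LinearMap.id)
    (hgg : TensorProduct.map g' g' ∘ₗ cobracketDefect ΔE ΔE' γ = 0) :
    cobracketDefect ΔE ΔE' γ = 0 ↔
      TensorProduct.map t' t' ∘ₗ cobracketDefect ΔE ΔE' γ = 0 ∧
        TensorProduct.map g' t' ∘ₗ cobracketDefect ΔE ΔE' γ = 0 := by
  refine ⟨fun hD ↦ by simp only [hD, comp_zero, and_self], fun ⟨htt, hgt⟩ ↦ ext fun x ↦ ?_⟩
  exact eq_zero_of_map_eq_zero_of_comm_eq_neg hid' (comm_cobracketDefect_apply anti anti' x)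
    congr($htt x) congr($hgt x) congr($hgg x)

theorem map_proj_retraction_comp_cobracketDefect
    (homg : TensorProduct.map g g ∘ₗ ΔE = ΔM ∘ₗ g)
    (hρ : ρ ∘ₗ g = TensorProduct.map g t ∘ₗ ΔE) (hρ' : ρ' ∘ₗ g' = TensorProduct.map g' t' ∘ₗ ΔE')
    (tγ : t' ∘ₗ γ = α ∘ₗ t + s ∘ₗ g) (gγ : g' ∘ₗ γ = β ∘ₗ g) :
    TensorProduct.map g' t' ∘ₗ cobracketDefect ΔE ΔE' γ
      = (ρ' ∘ₗ β - TensorProduct.map β α ∘ₗ ρ - TensorProduct.map β s ∘ₗ ΔM) ∘ₗ g := by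
  have source : TensorProduct.map g' t' ∘ₗ TensorProduct.map γ γ ∘ₗ ΔE
      = (TensorProduct.map β α ∘ₗ ρ + TensorProduct.map β s ∘ₗ ΔM) ∘ₗ g := by
    rw [← comp_assoc, ← TensorProduct.map_comp, tγ, gγ, TensorProduct.map_add_right,
      TensorProduct.map_comp, TensorProduct.map_comp, add_comp, add_comp, comp_assoc, comp_assoc,
      comp_assoc, comp_assoc, hρ, homg]
  have target : TensorProduct.map g' t' ∘ₗ ΔE' ∘ₗ γ = ρ' ∘ₗ β ∘ₗ g := by
    rw [← comp_assoc, ← hρ', comp_assoc, gγ]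
  rw [cobracketDefect, comp_sub, source, target, ← comp_assoc, ← sub_comp, sub_add_eq_sub_sub]

theorem map_retraction_retraction_comp_cobracketDefect
    (anti : ΔE = -((TensorProduct.comm R E E).toLinearMap ∘ₗ ΔE))
    (homg : TensorProduct.map g g ∘ₗ ΔE = ΔM ∘ₗ g)
    (hh : h ∘ₗ g = TensorProduct.map t t ∘ₗ ΔE - ΔC ∘ₗ t)
    (hρ : ρ ∘ₗ g = TensorProduct.map g t ∘ₗ ΔE)
    (hh' : h' ∘ₗ g' = TensorProduct.map t' t' ∘ₗ ΔE' - ΔC' ∘ₗ t')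
    (homα : TensorProduct.map α α ∘ₗ ΔC = ΔC' ∘ₗ α)
    (tγ : t' ∘ₗ γ = α ∘ₗ t + s ∘ₗ g) (gγ : g' ∘ₗ γ = β ∘ₗ g) :
    TensorProduct.map t' t' ∘ₗ cobracketDefect ΔE ΔE' γ
      = (h' ∘ₗ β - TensorProduct.map α α ∘ₗ h
          - (TensorProduct.map s α ∘ₗ ρ
            - (TensorProduct.comm R C' C').toLinearMap ∘ₗ TensorProduct.map s α ∘ₗ ρ
            - ΔC' ∘ₗ s + TensorProduct.map s s ∘ₗ ΔM)) ∘ₗ g := by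
  have htt : TensorProduct.map t t ∘ₗ ΔE = h ∘ₗ g + ΔC ∘ₗ t := eq_add_of_sub_eq hh.symm
  have htt' : TensorProduct.map t' t' ∘ₗ ΔE' = h' ∘ₗ g' + ΔC' ∘ₗ t' := eq_add_of_sub_eq hh'.symm
  have htg : TensorProduct.map t g ∘ₗ ΔE = -((TensorProduct.comm R M C).toLinearMap ∘ₗ ρ ∘ₗ g) := by
    rw [anti, hρ, comp_neg, ← comp_assoc, ← comp_assoc, TensorProduct.map_comp_comm_eq]
  have source : TensorProduct.map t' t' ∘ₗ TensorProduct.map γ γ ∘ₗ ΔE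
      = (TensorProduct.map α α ∘ₗ h + TensorProduct.map s α ∘ₗ ρ
          - (TensorProduct.comm R C' C').toLinearMap ∘ₗ TensorProduct.map s α ∘ₗ ρ
          + TensorProduct.map s s ∘ₗ ΔM) ∘ₗ g + ΔC' ∘ₗ α ∘ₗ t := by
    have hαs : TensorProduct.map α s ∘ₗ (TensorProduct.comm R M C).toLinearMap
        = (TensorProduct.comm R C' C').toLinearMap ∘ₗ TensorProduct.map s α :=
      TensorProduct.map_comp_comm_eq _ _
    rw [← comp_assoc, ← TensorProduct.map_comp, tγ]
    simp only [TensorProduct.map_add_left, TensorProduct.map_add_right, TensorProduct.map_comp,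
      add_comp, sub_comp, comp_assoc, htt, htg, ← hρ, homg, comp_add, comp_neg]
    rw [← comp_assoc _ _ (TensorProduct.map α s), hαs, ← comp_assoc _ _ (TensorProduct.map α α),
      ← comp_assoc _ _ (TensorProduct.map α α), homα]
    simp only [comp_assoc]
    abel
  have target : TensorProduct.map t' t' ∘ₗ ΔE' ∘ₗ γ
      = (h' ∘ₗ β + ΔC' ∘ₗ s) ∘ₗ g + ΔC' ∘ₗ α ∘ₗ t := by
    rw [← comp_assoc, htt', add_comp, comp_assoc, comp_assoc, gγ, tγ, comp_add, add_comp,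
      comp_assoc, comp_assoc]
    abel
  rw [cobracketDefect, comp_sub, source, target, add_sub_add_right_eq_sub, ← sub_comp]
  congr 1
  abel

theorem map_proj_proj_comp_cobracketDefect
    (homg : TensorProduct.map g g ∘ₗ ΔE = ΔM ∘ₗ g)
    (homg' : TensorProduct.map g' g' ∘ₗ ΔE' = ΔM' ∘ₗ g') (gγ : g' ∘ₗ γ = β ∘ₗ g) :
    TensorProduct.map g' g' ∘ₗ cobracketDefect ΔE ΔE' γ = cobracketDefect ΔM ΔM' β ∘ₗ g := by
  have source : TensorProduct.map g' g' ∘ₗ TensorProduct.map γ γ ∘ₗ ΔE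
      = TensorProduct.map β β ∘ₗ ΔM ∘ₗ g := by
    rw [← comp_assoc, ← TensorProduct.map_comp, gγ, TensorProduct.map_comp, comp_assoc, homg]
  have target : TensorProduct.map g' g' ∘ₗ ΔE' ∘ₗ γ = ΔM' ∘ₗ β ∘ₗ g := by
    rw [← comp_assoc, homg', comp_assoc, gγ]
  rw [cobracketDefect, cobracketDefect, comp_sub, source, target, sub_comp, comp_assoc, comp_assoc]

theorem retraction_comp_operator_comp_sub (homα : RC' ∘ₗ α = α ∘ₗ RC) (homg : RM ∘ₗ g = g ∘ₗ RE)
    (hφ : φ ∘ₗ g = t ∘ₗ RE - RC ∘ₗ t) (hφ' : φ' ∘ₗ g' = t' ∘ₗ RE' - RC' ∘ₗ t')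
    (tγ : t' ∘ₗ γ = α ∘ₗ t + s ∘ₗ g) (gγ : g' ∘ₗ γ = β ∘ₗ g) :
    t' ∘ₗ (RE' ∘ₗ γ - γ ∘ₗ RE) = (φ' ∘ₗ β - α ∘ₗ φ - (s ∘ₗ RM - RC' ∘ₗ s)) ∘ₗ g := by
  have source : t' ∘ₗ γ ∘ₗ RE = (α ∘ₗ φ + s ∘ₗ RM) ∘ₗ g + α ∘ₗ RC ∘ₗ t := by
    have htRE : t ∘ₗ RE = φ ∘ₗ g + RC ∘ₗ t := eq_add_of_sub_eq hφ.symm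
    rw [← comp_assoc, tγ, add_comp, comp_assoc, comp_assoc, htRE, ← homg, comp_add, add_comp,
      comp_assoc, comp_assoc]
    abel
  have target : t' ∘ₗ RE' ∘ₗ γ = (φ' ∘ₗ β + RC' ∘ₗ s) ∘ₗ g + α ∘ₗ RC ∘ₗ t := by
    have htRE' : t' ∘ₗ RE' = φ' ∘ₗ g' + RC' ∘ₗ t' := eq_add_of_sub_eq hφ'.symm
    rw [← comp_assoc, htRE', add_comp, comp_assoc, comp_assoc, gγ, tγ, comp_add, ← comp_assoc t,
      homα, add_comp, comp_assoc, comp_assoc, comp_assoc]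
    abel
  rw [comp_sub, source, target, add_sub_add_right_eq_sub, ← sub_comp]
  congr 1
  abel

theorem proj_comp_operator_comp_eq (homβ : RM' ∘ₗ β = β ∘ₗ RM) (homg : RM ∘ₗ g = g ∘ₗ RE)
    (homg' : RM' ∘ₗ g' = g' ∘ₗ RE') (gγ : g' ∘ₗ γ = β ∘ₗ g) :
    g' ∘ₗ (RE' ∘ₗ γ) = g' ∘ₗ (γ ∘ₗ RE) := by
  rw [← comp_assoc, ← homg', comp_assoc, gγ, ← comp_assoc, homβ, comp_assoc, homg, ← comp_assoc,
    ← gγ, comp_assoc]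

theorem map_comp_cobracket_eq_iff
    (anti : ΔE = -((TensorProduct.comm R E E).toLinearMap ∘ₗ ΔE))
    (anti' : ΔE' = -((TensorProduct.comm R E' E').toLinearMap ∘ₗ ΔE'))
    (hid' : f' ∘ₗ t' + σ' ∘ₗ g' = LinearMap.id) (surjg : Function.Surjective g)
    (homg : TensorProduct.map g g ∘ₗ ΔE = ΔM ∘ₗ g)
    (homg' : TensorProduct.map g' g' ∘ₗ ΔE' = ΔM' ∘ₗ g')
    (homα : TensorProduct.map α α ∘ₗ ΔC = ΔC' ∘ₗ α)
    (homβ : TensorProduct.map β β ∘ₗ ΔM = ΔM' ∘ₗ β)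
    (hh : h ∘ₗ g = TensorProduct.map t t ∘ₗ ΔE - ΔC ∘ₗ t)
    (hh' : h' ∘ₗ g' = TensorProduct.map t' t' ∘ₗ ΔE' - ΔC' ∘ₗ t')
    (hρ : ρ ∘ₗ g = TensorProduct.map g t ∘ₗ ΔE) (hρ' : ρ' ∘ₗ g' = TensorProduct.map g' t' ∘ₗ ΔE')
    (tγ : t' ∘ₗ γ = α ∘ₗ t + s ∘ₗ g) (gγ : g' ∘ₗ γ = β ∘ₗ g) :
    TensorProduct.map γ γ ∘ₗ ΔE = ΔE' ∘ₗ γ ↔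
      h' ∘ₗ β - TensorProduct.map α α ∘ₗ h
          = TensorProduct.map s α ∘ₗ ρ
            - (TensorProduct.comm R C' C').toLinearMap ∘ₗ TensorProduct.map s α ∘ₗ ρ
            - ΔC' ∘ₗ s + TensorProduct.map s s ∘ₗ ΔM ∧
        ρ' ∘ₗ β - TensorProduct.map β α ∘ₗ ρ = TensorProduct.map β s ∘ₗ ΔM := by
  have htt := map_retraction_retraction_comp_cobracketDefect anti homg hh hρ hh' homα tγ gγ
  have hgt := map_proj_retraction_comp_cobracketDefect homg hρ hρ' tγ gγ
  have hgg : TensorProduct.map g' g' ∘ₗ cobracketDefect ΔE ΔE' γ = 0 := by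
    rw [map_proj_proj_comp_cobracketDefect homg homg' gγ, cobracketDefect_eq_zero_iff.2 homβ,
      zero_comp]
  rw [← cobracketDefect_eq_zero_iff, cobracketDefect_eq_zero_iff_components anti anti' hid' hgg,
    htt, hgt, comp_eq_zero_iff_of_surjective surjg, comp_eq_zero_iff_of_surjective surjg,
    sub_eq_zero, sub_eq_zero]

theorem operator_comp_eq_iff (hid' : f' ∘ₗ t' + σ' ∘ₗ g' = LinearMap.id)
    (surjg : Function.Surjective g) (homg : RM ∘ₗ g = g ∘ₗ RE) (homg' : RM' ∘ₗ g' = g' ∘ₗ RE')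
    (homα : RC' ∘ₗ α = α ∘ₗ RC) (homβ : RM' ∘ₗ β = β ∘ₗ RM)
    (hφ : φ ∘ₗ g = t ∘ₗ RE - RC ∘ₗ t) (hφ' : φ' ∘ₗ g' = t' ∘ₗ RE' - RC' ∘ₗ t')
    (tγ : t' ∘ₗ γ = α ∘ₗ t + s ∘ₗ g) (gγ : g' ∘ₗ γ = β ∘ₗ g) :
    RE' ∘ₗ γ = γ ∘ₗ RE ↔ φ' ∘ₗ β - α ∘ₗ φ = s ∘ₗ RM - RC' ∘ₗ s := by
  have ht := retraction_comp_operator_comp_sub homα homg hφ hφ' tγ gγ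
  have hg := proj_comp_operator_comp_eq homβ homg homg' gγ
  calc RE' ∘ₗ γ = γ ∘ₗ RE ↔ t' ∘ₗ (RE' ∘ₗ γ - γ ∘ₗ RE) = 0 := by
        rw [comp_sub, sub_eq_zero]
        exact ⟨fun hγ ↦ by rw [hγ], fun htγ ↦ eq_of_comp_eq_of_splitting hid' htγ hg⟩
    _ ↔ φ' ∘ₗ β - α ∘ₗ φ = s ∘ₗ RM - RC' ∘ₗ s := by
        rw [ht, comp_eq_zero_iff_of_surjective surjg, sub_eq_zero]

end Defect

section Extension

variable {R : Type*} [CommRing R] {C C' M M' E E' : Type*}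
  [AddCommGroup C] [Module R C] [AddCommGroup C'] [Module R C']
  [AddCommGroup M] [Module R M] [AddCommGroup M'] [Module R M']
  [AddCommGroup E] [Module R E] [AddCommGroup E'] [Module R E']
  {f : C →ₗ[R] E} {g : E →ₗ[R] M} {t : E →ₗ[R] C}
  {f' : C' →ₗ[R] E'} {g' : E' →ₗ[R] M'} {t' : E' →ₗ[R] C'} {σ' : M' →ₗ[R] E'}
  {α : C →ₗ[R] C'} {β : M →ₗ[R] M'} {γ : E →ₗ[R] E'} {s : M →ₗ[R] C'}

theorem exists_retraction_comp_eq_add (hfg : Function.Exact f g) (surjg : Function.Surjective g)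
    (ht : t ∘ₗ f = LinearMap.id) (ht' : t' ∘ₗ f' = LinearMap.id) (γf : γ ∘ₗ f = f' ∘ₗ α) :
    ∃ s : M →ₗ[R] C', t' ∘ₗ γ = α ∘ₗ t + s ∘ₗ g := by
  obtain ⟨s, hs⟩ : ∃ s : M →ₗ[R] C', s ∘ₗ g = t' ∘ₗ γ - α ∘ₗ t :=
    exists_comp_eq_of_exact hfg surjg <| by
      rw [sub_comp, comp_assoc, comp_assoc, γf, ht, ← comp_assoc, ht', id_comp, comp_id, sub_self]
  exact ⟨s, by rw [hs]; abel⟩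

theorem comp_inclusion_eq_of_components (hid' : f' ∘ₗ t' + σ' ∘ₗ g' = LinearMap.id)
    (gf : g ∘ₗ f = 0) (gf' : g' ∘ₗ f' = 0)
    (ht : t ∘ₗ f = LinearMap.id) (ht' : t' ∘ₗ f' = LinearMap.id)
    (tγ : t' ∘ₗ γ = α ∘ₗ t + s ∘ₗ g) (gγ : g' ∘ₗ γ = β ∘ₗ g) : γ ∘ₗ f = f' ∘ₗ α := by
  apply eq_of_comp_eq_of_splitting hid'
  · rw [← comp_assoc, tγ, add_comp, comp_assoc, comp_assoc, ht, gf, comp_zero, add_zero, comp_id,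
      ← comp_assoc, ht', id_comp]
  · rw [← comp_assoc, gγ, comp_assoc, gf, comp_zero, ← comp_assoc, gf', zero_comp]

theorem map_range_eq_range_of_comp_eq (γf : γ ∘ₗ f = f' ∘ₗ α) (hα : Function.Surjective α) :
    Submodule.map γ (range f) = range f' := by
  rw [← range_comp, γf, range_comp_of_range_eq_top f' (range_eq_top.2 hα)]

end Extension

section Extensibility

variable {R : Type*} [CommRing R] {C M E : Type*} [AddCommGroup C] [Module R C]
  [AddCommGroup M] [Module R M] [AddCommGroup E] [Module R E]

theorem stmt12_general {ΔC : C →ₗ[R] C ⊗[R] C} {RC : C →ₗ[R] C}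
    {ΔM : M →ₗ[R] M ⊗[R] M} {RM : M →ₗ[R] M} {ΔE : E →ₗ[R] E ⊗[R] E} {RE : E →ₗ[R] E}
    (anti : ΔE = -((TensorProduct.comm R E E).toLinearMap ∘ₗ ΔE))
    {f : C →ₗ[R] E} {g : E →ₗ[R] M}
    (homg : TensorProduct.map g g ∘ₗ ΔE = ΔM ∘ₗ g ∧ RM ∘ₗ g = g ∘ₗ RE)
    (surjg : Function.Surjective g) (hfg : Function.Exact f g)
    {t : E →ₗ[R] C} (ht : t ∘ₗ f = LinearMap.id)
    {h : M →ₗ[R] C ⊗[R] C} {ρ : M →ₗ[R] M ⊗[R] C} {φ : M →ₗ[R] C}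
    (hh : h ∘ₗ g = TensorProduct.map t t ∘ₗ ΔE - ΔC ∘ₗ t)
    (hρ : ρ ∘ₗ g = TensorProduct.map g t ∘ₗ ΔE)
    (hφ : φ ∘ₗ g = t ∘ₗ RE - RC ∘ₗ t)
    {α : C →ₗ[R] C} {β : M →ₗ[R] M}
    (homα : TensorProduct.map α α ∘ₗ ΔC = ΔC ∘ₗ α ∧ RC ∘ₗ α = α ∘ₗ RC)
    (bijα : Function.Bijective α)
    (homβ : TensorProduct.map β β ∘ₗ ΔM = ΔM ∘ₗ β ∧ RM ∘ₗ β = β ∘ₗ RM)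
    (bijβ : Function.Bijective β) :
    (∃ γ : E →ₗ[R] E, (TensorProduct.map γ γ ∘ₗ ΔE = ΔE ∘ₗ γ ∧ RE ∘ₗ γ = γ ∘ₗ RE) ∧
        Function.Bijective γ ∧ Submodule.map γ (range f) = range f ∧
        γ ∘ₗ f = f ∘ₗ α ∧ g ∘ₗ γ = β ∘ₗ g) ↔
      ∃ s : M →ₗ[R] C,
        h ∘ₗ β - TensorProduct.map α α ∘ₗ h
          = TensorProduct.map s α ∘ₗ ρ
            - (TensorProduct.comm R C C).toLinearMap ∘ₗ TensorProduct.map s α ∘ₗ ρ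
            - ΔC ∘ₗ s + TensorProduct.map s s ∘ₗ ΔM ∧
        ρ ∘ₗ β - TensorProduct.map β α ∘ₗ ρ = TensorProduct.map β s ∘ₗ ΔM ∧
        φ ∘ₗ β - α ∘ₗ φ = s ∘ₗ RM - RC ∘ₗ s := by
  obtain ⟨σ, -, -, hid⟩ := exists_section_of_retraction hfg surjg ht
  have hom_iff {γ : E →ₗ[R] E} {s : M →ₗ[R] C} (tγ : t ∘ₗ γ = α ∘ₗ t + s ∘ₗ g)
      (gγ : g ∘ₗ γ = β ∘ₗ g) :=
    and_congr (map_comp_cobracket_eq_iff anti anti hid surjg homg.1 homg.1 homα.1 homβ.1 hh hh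
      hρ hρ tγ gγ) (operator_comp_eq_iff hid surjg homg.2 homg.2 homα.2 homβ.2 hφ hφ tγ gγ)
  constructor
  · rintro ⟨γ, hγ, -, -, γf, gγ⟩
    obtain ⟨s, tγ⟩ := exists_retraction_comp_eq_add hfg surjg ht ht γf
    exact ⟨s, and_assoc.1 ((hom_iff tγ gγ).1 hγ)⟩
  · rintro ⟨s, hs⟩
    obtain ⟨γ, tγ, gγ⟩ :=
      exists_comp_eq_and_comp_eq_of_retraction hfg surjg ht (α ∘ₗ t + s ∘ₗ g) (β ∘ₗ g)
    have gf : g ∘ₗ f = 0 := hfg.linearMap_comp_eq_zero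
    have γf : γ ∘ₗ f = f ∘ₗ α := comp_inclusion_eq_of_components hid gf gf ht ht tγ gγ
    have injf : Function.Injective f := injective_of_comp_eq_id f t ht
    exact ⟨γ, (hom_iff tγ gγ).2 (and_assoc.2 hs),
      bijective_of_shortExact injf hfg surjg injf hfg surjg γf gγ bijα bijβ,
      map_range_eq_range_of_comp_eq γf bijα.2, γf, gγ⟩

end Extensibility

theorem stmt12 (lam : k) (ΔC : C →ₗ[k] C ⊗[k] C) (RC : C →ₗ[k] C)
    (ΔM : M →ₗ[k] M ⊗[k] M) (RM : M →ₗ[k] M)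
    (ΔE : E →ₗ[k] E ⊗[k] E) (RE : E →ₗ[k] E)
    (hC : IsRBLC lam ΔC RC) (hM : IsRBLC lam ΔM RM) (hE : IsRBLC lam ΔE RE)
    (f : C →ₗ[k] E) (g : E →ₗ[k] M)
    (homf : IsHom ΔC RC ΔE RE f) (homg : IsHom ΔE RE ΔM RM g)
    (injf : Function.Injective f) (surjg : Function.Surjective g)
    (hexact : LinearMap.range f = LinearMap.ker g)
    (t : E →ₗ[k] C) (ht : t ∘ₗ f = LinearMap.id)
    (h : M →ₗ[k] C ⊗[k] C) (ρ : M →ₗ[k] M ⊗[k] C) (φ : M →ₗ[k] C)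
    (hh : h ∘ₗ g = TensorProduct.map t t ∘ₗ ΔE - ΔC ∘ₗ t)
    (hρ : ρ ∘ₗ g = TensorProduct.map g t ∘ₗ ΔE)
    (hφ : φ ∘ₗ g = t ∘ₗ RE - RC ∘ₗ t)
    (α : C →ₗ[k] C) (β : M →ₗ[k] M)
    (homα : IsHom ΔC RC ΔC RC α) (bijα : Function.Bijective α)
    (homβ : IsHom ΔM RM ΔM RM β) (bijβ : Function.Bijective β) :
    Extensible ΔE RE f g α β ↔
      ∃ s : M →ₗ[k] C,
        -- hβ − (α⊗α)h = (s⊗α)ρ − τ(s⊗α)ρ − Δ_C s + (s⊗s)Δ_M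
        h ∘ₗ β - TensorProduct.map α α ∘ₗ h
          = TensorProduct.map s α ∘ₗ ρ
            - (TensorProduct.comm k C C).toLinearMap ∘ₗ TensorProduct.map s α ∘ₗ ρ
            - ΔC ∘ₗ s + TensorProduct.map s s ∘ₗ ΔM ∧
        -- ρβ − (β⊗α)ρ = (β⊗s)Δ_M
        ρ ∘ₗ β - TensorProduct.map β α ∘ₗ ρ = TensorProduct.map β s ∘ₗ ΔM ∧
        -- φβ − αφ = sR_M − R_C s
        φ ∘ₗ β - α ∘ₗ φ = s ∘ₗ RM - RC ∘ₗ s := by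
  exact stmt12_general hE.1 homg surjg (exact_iff.2 hexact.symm) ht hh hρ hφ homα bijα homβ bijβ

end
end

section
/- Let (h, ρ, φ) be a non-abelian 2-cocycle on the λ-weighted Rota-Baxter Lie coalgebra (C, Δ_C, R_C) with values in (M, Δ_M, R_M), and let (α, β) ∈ Aut(C)×Aut(M) be a pair of λ-weighted Rota-Baxter Lie coalgebra automorphisms. Then the triple h_{(α,β)} = (α⊗α)hβ^{−1}, ρ_{(α,β)} = (β⊗α)ρβ^{−1}, φ_{(α,β)} = αφβ^{−1} is again a non-abelian 2-cocycle on (C, Δ_C, R_C) with values in (M, Δ_M, R_M). -/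
open TensorProduct LinearMap

section

variable {k : Type*} [Field k]
variable {C : Type*} [AddCommGroup C] [Module k C]
variable {M : Type*} [AddCommGroup M] [Module k M]
variable {E : Type*} [AddCommGroup E] [Module k E]

/-!
Both sides of each cocycle identity are built from `h`, `ρ`, `φ` and the structure maps by
composition, linear combination, tensoring, `τ` and reassociation, and all of these operations
preserve commuting squares. So each side for the transported triple, precomposed with `β`, is the
same side for `(h, ρ, φ)` followed by a tensor product of copies of `α` and `β` that is common to
both sides. The two sides thus agree after precomposition with `β`, which can be cancelled because
it is surjective.
-/

section Intertwines

variable {R : Type*} [CommSemiring R]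
variable {A A' B B' D D' : Type*}

section AddCommMonoid

variable [AddCommMonoid A] [Module R A] [AddCommMonoid A'] [Module R A']
variable [AddCommMonoid B] [Module R B] [AddCommMonoid B'] [Module R B']
variable [AddCommMonoid D] [Module R D] [AddCommMonoid D'] [Module R D']

/-- The linear maps `a` and `b` intertwine `f` and `f'`, that is, the square with horizontal sides
`f : A → B`, `f' : A' → B'` and vertical sides `a : A → A'`, `b : B → B'` commutes. The vertical
sides come first because they stay fixed while the horizontal ones are composed, added and
tensored. -/
def Intertwines (a : A →ₗ[R] A') (b : B →ₗ[R] B') (f : A →ₗ[R] B) (f' : A' →ₗ[R] B') : Prop :=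
  f' ∘ₗ a = b ∘ₗ f

namespace Intertwines

variable {a : A →ₗ[R] A'} {b : B →ₗ[R] B'} {d : D →ₗ[R] D'}
variable {f g : A →ₗ[R] B} {f' g' : A' →ₗ[R] B'}

theorem eq_of_surjective (hf : Intertwines a b f f') (ha : Function.Surjective a) (hfg : f = g)
    (hg : Intertwines a b g g') : f' = g' := by
  subst hfg
  exact (LinearMap.cancel_right ha).1 (hf.trans hg.symm)

theorem zero (a : A →ₗ[R] A') (b : B →ₗ[R] B') : Intertwines a b 0 0 := by
  rw [Intertwines, LinearMap.zero_comp, LinearMap.comp_zero]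

theorem id (a : A →ₗ[R] A') : Intertwines a a LinearMap.id LinearMap.id := by
  rw [Intertwines, LinearMap.id_comp, LinearMap.comp_id]

theorem of_comp_eq_id {a' : A' →ₗ[R] A} (ha : a' ∘ₗ a = LinearMap.id) (b : B →ₗ[R] B')
    (f : A →ₗ[R] B) : Intertwines a b f (b ∘ₗ f ∘ₗ a') := by
  rw [Intertwines, LinearMap.comp_assoc, LinearMap.comp_assoc, ha, LinearMap.comp_id]

theorem comp {p : B →ₗ[R] D} {p' : B' →ₗ[R] D'}
    (hp : Intertwines b d p p') (hf : Intertwines a b f f') :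
    Intertwines a d (p ∘ₗ f) (p' ∘ₗ f') := by
  rw [Intertwines, LinearMap.comp_assoc, hf, ← LinearMap.comp_assoc, hp, LinearMap.comp_assoc]

theorem add (hf : Intertwines a b f f') (hg : Intertwines a b g g') :
    Intertwines a b (f + g) (f' + g') := by
  rw [Intertwines, LinearMap.add_comp, hf, hg, LinearMap.comp_add]

theorem smul (r : R) (hf : Intertwines a b f f') : Intertwines a b (r • f) (r • f') := by
  rw [Intertwines, LinearMap.smul_comp, hf, LinearMap.comp_smul]

theorem tensorMap {X X' Y Y' : Type*}
    [AddCommMonoid X] [Module R X] [AddCommMonoid X'] [Module R X']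
    [AddCommMonoid Y] [Module R Y] [AddCommMonoid Y'] [Module R Y']
    {x : X →ₗ[R] X'} {y : Y →ₗ[R] Y'} {p : X →ₗ[R] Y} {p' : X' →ₗ[R] Y'}
    (hf : Intertwines a b f f') (hp : Intertwines x y p p') :
    Intertwines (TensorProduct.map a x) (TensorProduct.map b y)
      (TensorProduct.map f p) (TensorProduct.map f' p') := by
  rw [Intertwines, ← TensorProduct.map_comp, hf, hp, TensorProduct.map_comp]

theorem lTensor (d : D →ₗ[R] D') (hf : Intertwines a b f f') :
    Intertwines (TensorProduct.map d a) (TensorProduct.map d b)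
      (LinearMap.lTensor D f) (LinearMap.lTensor D' f') :=
  (Intertwines.id d).tensorMap hf

theorem rTensor (d : D →ₗ[R] D') (hf : Intertwines a b f f') :
    Intertwines (TensorProduct.map a d) (TensorProduct.map b d)
      (LinearMap.rTensor D f) (LinearMap.rTensor D' f') :=
  hf.tensorMap (Intertwines.id d)

theorem tensorComm (a : A →ₗ[R] A') (b : B →ₗ[R] B') :
    Intertwines (TensorProduct.map a b) (TensorProduct.map b a)
      (TensorProduct.comm R A B).toLinearMap (TensorProduct.comm R A' B').toLinearMap :=
  (TensorProduct.map_comp_comm_eq b a).symm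

theorem tensorAssoc (a : A →ₗ[R] A') (b : B →ₗ[R] B') (d : D →ₗ[R] D') :
    Intertwines (TensorProduct.map (TensorProduct.map a b) d)
      (TensorProduct.map a (TensorProduct.map b d))
      (TensorProduct.assoc R A B D).toLinearMap (TensorProduct.assoc R A' B' D').toLinearMap :=
  (TensorProduct.map_map_comp_assoc_eq a b d).symm

end Intertwines

end AddCommMonoid

theorem Intertwines.sub [AddCommMonoid A] [Module R A] [AddCommMonoid A'] [Module R A']
    [AddCommGroup B] [Module R B] [AddCommGroup B'] [Module R B']
    {a : A →ₗ[R] A'} {b : B →ₗ[R] B'} {f g : A →ₗ[R] B} {f' g' : A' →ₗ[R] B'}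
    (hf : Intertwines a b f f') (hg : Intertwines a b g g') :
    Intertwines a b (f - g) (f' - g') := by
  rw [Intertwines, LinearMap.sub_comp, hf, hg, LinearMap.comp_sub]

end Intertwines

section Transport

variable {C' : Type*} [AddCommGroup C'] [Module k C']
variable {M' : Type*} [AddCommGroup M'] [Module k M']

theorem isHom_iff_intertwines {ΔC : C →ₗ[k] C ⊗[k] C} {RC : C →ₗ[k] C}
    {ΔE : E →ₗ[k] E ⊗[k] E} {RE : E →ₗ[k] E} {θ : C →ₗ[k] E} :
    IsHom ΔC RC ΔE RE θ ↔
      Intertwines θ (TensorProduct.map θ θ) ΔC ΔE ∧ Intertwines θ θ RC RE :=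
  and_congr_left' eq_comm

theorem stmt13_general {lam : k}
    {ΔC : C →ₗ[k] C ⊗[k] C} {RC : C →ₗ[k] C} {ΔM : M →ₗ[k] M ⊗[k] M} {RM : M →ₗ[k] M}
    {ΔC' : C' →ₗ[k] C' ⊗[k] C'} {RC' : C' →ₗ[k] C'}
    {ΔM' : M' →ₗ[k] M' ⊗[k] M'} {RM' : M' →ₗ[k] M'}
    {h : M →ₗ[k] C ⊗[k] C} {ρ : M →ₗ[k] M ⊗[k] C} {φ : M →ₗ[k] C}
    {h' : M' →ₗ[k] C' ⊗[k] C'} {ρ' : M' →ₗ[k] M' ⊗[k] C'} {φ' : M' →ₗ[k] C'}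
    {α : C →ₗ[k] C'} {β : M →ₗ[k] M'}
    (hcoc : NA2Cocycle lam ΔC RC ΔM RM h ρ φ)
    (homα : IsHom ΔC RC ΔC' RC' α) (homβ : IsHom ΔM RM ΔM' RM' β)
    (surjβ : Function.Surjective β)
    (hh : Intertwines β (TensorProduct.map α α) h h')
    (hρ : Intertwines β (TensorProduct.map β α) ρ ρ')
    (hφ : Intertwines β α φ φ') :
    NA2Cocycle lam ΔC' RC' ΔM' RM' h' ρ' φ' := by
  obtain ⟨antisymm, coJacobi, coaction, derivation, operator, mixed⟩ := hcoc
  obtain ⟨hΔC, hRC⟩ := isHom_iff_intertwines.1 homα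
  obtain ⟨hΔM, hRM⟩ := isHom_iff_intertwines.1 homβ
  have hτρ := (Intertwines.tensorComm β α).comp hρ
  have hτρR := (Intertwines.tensorComm β α).comp (hρ.comp hRM)
  have hΔh := (Intertwines.tensorAssoc α α α).comp ((hΔC.rTensor α).comp hh)
  have hhρ := (Intertwines.tensorAssoc α α α).comp ((hh.rTensor α).comp hρ)
  have hρρ := (Intertwines.tensorAssoc β α α).comp ((hρ.rTensor α).comp hρ)
  have hρΔ := (Intertwines.tensorAssoc β α β).comp ((hρ.rTensor β).comp hΔM)
  have hτC := Intertwines.tensorComm α α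
  have hlamCC := (Intertwines.id (TensorProduct.map α α)).smul lam
  have hlamMC := (Intertwines.id (TensorProduct.map β α)).smul lam
  refine ⟨?_, ?_, ?_, ?_, ?_, ?_⟩
  · exact (hτC.comp hh |>.add hh).eq_of_surjective surjβ antisymm (.zero _ _)
  · have lhs := (hΔC.lTensor α).comp hh |>.sub hΔh |>.add ((hτC.lTensor α).comp hΔh)
    have rhs := hhρ.add ((hh.lTensor α).comp hτρ) |>.sub ((hτC.lTensor α).comp hhρ)
    exact lhs.eq_of_surjective surjβ coJacobi rhs
  · have lhs := (hΔC.lTensor β).comp hρ |>.add ((hh.lTensor β).comp hΔM)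
    have rhs := hρρ.sub ((hτC.lTensor β).comp hρρ)
    exact lhs.eq_of_surjective surjβ coaction rhs
  · have lhs := (Intertwines.tensorAssoc β β α).comp ((hΔM.rTensor α).comp hρ)
    have rhs := ((Intertwines.tensorComm α β).lTensor β).comp hρΔ |>.add ((hρ.lTensor β).comp hΔM)
    exact lhs.eq_of_surjective surjβ derivation rhs
  · have lhs := (hφ.tensorMap hRC).comp hρ
      |>.sub ((hRC.tensorMap hφ).comp hτρ)
      |>.sub ((hφ.rTensor α).comp (hρ.comp hRM))
      |>.add ((hφ.lTensor α).comp hτρR)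
      |>.add ((hφ.tensorMap hφ).comp hΔM)
      |>.sub ((hRC.lTensor α |>.add (hRC.rTensor α) |>.add hlamCC).comp (hΔC.comp hφ))
    have rhs := (hRC.rTensor α |>.add (hRC.lTensor α) |>.add hlamCC).comp (hh.comp hRM)
      |>.sub ((hRC.tensorMap hRC).comp hh)
    exact lhs.eq_of_surjective surjβ operator rhs
  · have lhs := (hRM.tensorMap hφ).comp hΔM |>.add ((hRM.tensorMap hRC).comp hρ)
    have rhs := (hφ.lTensor β).comp (hΔM.comp hRM)
      |>.add ((hRC.lTensor β |>.add (hRM.rTensor α) |>.add hlamMC).comp (hρ.comp hRM))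
    exact lhs.eq_of_surjective surjβ mixed rhs

end Transport

theorem stmt13 (lam : k) (ΔC : C →ₗ[k] C ⊗[k] C) (RC : C →ₗ[k] C)
    (ΔM : M →ₗ[k] M ⊗[k] M) (RM : M →ₗ[k] M)
    (hC : IsRBLC lam ΔC RC) (hM : IsRBLC lam ΔM RM)
    (h : M →ₗ[k] C ⊗[k] C) (ρ : M →ₗ[k] M ⊗[k] C) (φ : M →ₗ[k] C)
    (hcoc : NA2Cocycle lam ΔC RC ΔM RM h ρ φ)
    (α : C →ₗ[k] C) (β : M →ₗ[k] M)
    (homα : IsHom ΔC RC ΔC RC α) (bijα : Function.Bijective α)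
    (homβ : IsHom ΔM RM ΔM RM β) (bijβ : Function.Bijective β)
    -- `β'` is the inverse of `β`:
    (β' : M →ₗ[k] M) (hβ'₁ : β ∘ₗ β' = LinearMap.id) (hβ'₂ : β' ∘ₗ β = LinearMap.id) :
    NA2Cocycle lam ΔC RC ΔM RM
      (TensorProduct.map α α ∘ₗ h ∘ₗ β')
      (TensorProduct.map β α ∘ₗ ρ ∘ₗ β')
      (α ∘ₗ φ ∘ₗ β') := by
  exact stmt13_general hcoc homα homβ bijβ.2 (.of_comp_eq_id hβ'₂ _ _) (.of_comp_eq_id hβ'₂ _ _)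
    (.of_comp_eq_id hβ'₂ _ _)

end
end
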